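/- arXiv:2408.10480 — 4 statements merged into one kernel-verified Lean document; each statement's English description precedes it below -/
import Mathlib

section
/- Assume (A1)–(A3) and (A6)–(A7). Then there exists a threshold q* ∈ [q₁, q₂) such that c_NL*(q) = c₀* for all q ∈ [0, q*] and c_NL*(q) > c₀* for all q ∈ (q*, ∞). -/
open Filter Asymptotics MeasureTheory Set

noncomputable section

/-- A continuous, nonnegative, even, compactly supported dispersal kernel of total mass 1. -/
def IsKernel (J : ℝ → ℝ) : Prop :=
  Continuous J ∧ (∀ x, 0 ≤ J x) ∧ (∀ x, J (-x) = J x) ∧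
  HasCompactSupport J ∧ (∫ x, J x) = 1

/-- A nonlocal traveling wave front with speed `c` for the kernel `J` and nonlinearity `g`. -/
def IsNLFront (J : ℝ → ℝ) (g : ℝ → ℝ) (c : ℝ) (W : ℝ → ℝ) : Prop :=
  ContDiff ℝ 1 W ∧
  (∀ ξ, (∫ y, J (ξ - y) * W y) - W ξ + c * deriv W ξ + g (W ξ) = 0) ∧
  Tendsto W atBot (nhds 1) ∧ Tendsto W atTop (nhds 0) ∧
  (∀ ξ, deriv W ξ < 0)

/-- The linearized minimal speed `c₀* = inf_{λ>0} (∫ J(x)e^{λx}dx + γ₀ - 1)/λ`. -/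
noncomputable def c0star (J : ℝ → ℝ) (γ₀ : ℝ) : ℝ :=
  sInf ((fun l : ℝ => ((∫ x, J x * Real.exp (l * x)) + γ₀ - 1) / l) '' Ioi 0)

/-!
For a speed `c > 0` and `r = (L + 1) / c`, the front equation reads `W' = r (W - R W)`, where the
reaction-dispersal step `R` is order preserving once `L` bounds the Lipschitz constant of `g`. Its
bounded solutions are the fixed points of the order-preserving operator `T` that sends `W` to the
exponential average `∫₀^∞ r e^{-r s} R W (· + s) ds`.

A front `S` of speed `c` for a larger nonlinearity is a supersolution `T S ≤ S`. Let `φ ≤ S` be a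
small multiple of a step function. By Knaster–Tarski there is `V ≤ S` with `V = φ ⊔ T V`; it is an
approximate fixed point of `T`, and it still joins `1` to `0`, being nonzero because of `φ` and
below `1` because of `S`. Since `T` maps monotone profiles to uniformly Lipschitz ones, translates
of such `V` with `T V 0 = 1 / 2` subconverge, as `φ` shrinks to `0`, to a front. The same
compactness shows that fronts of a fixed speed persist under uniform limits of the nonlinearity.

Hence the set of `q` possessing fronts of every speed `c > c₀*` is closed downwards and from the
left, and the threshold is its supremum.
-/

open ProbabilityTheory
open scoped Topology NNReal

/-! ### Profiles and averages -/

/-- The class of functions in which fronts are sought: nonincreasing with values in `[0, 1]`. -/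
structure IsProfile (W : ℝ → ℝ) : Prop where
  antitone : Antitone W
  mem_Icc : ∀ x, W x ∈ Icc (0 : ℝ) 1

namespace IsProfile

variable {U V W : ℝ → ℝ}

theorem const {a : ℝ} (ha : a ∈ Icc (0 : ℝ) 1) : IsProfile fun _ => a :=
  ⟨antitone_const, fun _ => ha⟩

theorem comp_add_right (hW : IsProfile W) (a : ℝ) : IsProfile fun x => W (x + a) :=
  ⟨fun _ _ h => hW.antitone (add_le_add_left h a), fun _ => hW.mem_Icc _⟩

theorem indicator_Iic {ε : ℝ} (hε : ε ∈ Icc (0 : ℝ) 1) (b : ℝ) :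
    IsProfile ((Iic b).indicator fun _ => ε) where
  antitone x y hxy := by
    by_cases hy : y ≤ b
    · simp [hy, hxy.trans hy]
    · simpa [hy] using indicator_nonneg (fun _ _ => hε.1) x
  mem_Icc x := by
    by_cases hx : x ≤ b
    · simpa [hx] using hε
    · simp [hx]

theorem sup (hU : IsProfile U) (hV : IsProfile V) : IsProfile (U ⊔ V) :=
  ⟨hU.antitone.sup hV.antitone, fun x =>
    ⟨le_sup_of_le_left (hU.mem_Icc x).1, sup_le (hU.mem_Icc x).2 (hV.mem_Icc x).2⟩⟩

theorem of_tendsto {ι : Type*} {l : Filter ι} [NeBot l] {F : ι → ℝ → ℝ}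
    (hF : ∀ i, IsProfile (F i)) (h : ∀ x, Tendsto (fun i => F i x) l (𝓝 (V x))) : IsProfile V :=
  ⟨fun x y hxy => le_of_tendsto_of_tendsto' (h y) (h x) fun i => (hF i).antitone hxy,
    fun x => isClosed_Icc.mem_of_tendsto (h x) (.of_forall fun i => (hF i).mem_Icc x)⟩

theorem measurable (hW : IsProfile W) : Measurable W := hW.antitone.measurable

theorem abs_le_one (hW : IsProfile W) (x : ℝ) : |W x| ≤ 1 :=
  abs_le.2 ⟨by linarith [(hW.mem_Icc x).1], (hW.mem_Icc x).2⟩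

theorem integrable_comp_add_left (hW : IsProfile W) (ν : Measure ℝ) [IsFiniteMeasure ν] (x : ℝ) :
    Integrable (fun s => W (x + s)) ν :=
  .of_bound (hW.measurable.comp (measurable_const_add x)).aestronglyMeasurable 1
    (.of_forall fun s => hW.abs_le_one (x + s))

end IsProfile

/-- The average `∫ U (x + s) dν(s)` of the translates of `U`. Both the dispersal term and the
inversion of the transport term `c W'` of the front equation are of this form. -/
def translateAvg (ν : Measure ℝ) (U : ℝ → ℝ) (x : ℝ) : ℝ := ∫ s, U (x + s) ∂ν

section TranslateAvg

variable {ν : Measure ℝ} {U V : ℝ → ℝ}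

theorem translateAvg_comp_add_right (a x : ℝ) :
    translateAvg ν (fun y => U (y + a)) x = translateAvg ν U (x + a) := by
  simp only [translateAvg, add_right_comm]

variable [IsProbabilityMeasure ν]

theorem translateAvg_const (a x : ℝ) : translateAvg ν (fun _ => a) x = a := by
  simp [translateAvg]

theorem translateAvg_le_translateAvg (hU : IsProfile U) (hV : IsProfile V) {x y : ℝ}
    (h : ∀ s, U (x + s) ≤ V (y + s)) : translateAvg ν U x ≤ translateAvg ν V y :=
  integral_mono (hU.integrable_comp_add_left ν x) (hV.integrable_comp_add_left ν y) h

protected theorem IsProfile.translateAvg (hU : IsProfile U) : IsProfile (translateAvg ν U) where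
  antitone _ _ hxy := translateAvg_le_translateAvg hU hU fun s =>
    hU.antitone (add_le_add_left hxy s)
  mem_Icc x := by
    constructor
    · rw [← translateAvg_const (ν := ν) 0 x]
      exact translateAvg_le_translateAvg (.const (by simp)) hU fun _ => (hU.mem_Icc _).1
    · rw [← translateAvg_const (ν := ν) 1 x]
      exact translateAvg_le_translateAvg hU (.const (by simp)) fun _ => (hU.mem_Icc _).2

theorem tendsto_translateAvg {ι : Type*} {l : Filter ι} [l.IsCountablyGenerated]
    {F : ι → ℝ → ℝ} {u : ι → ℝ} {y : ℝ} (hF : ∀ i, IsProfile (F i))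
    (h : ∀ s, Tendsto (fun i => F i (u i + s)) l (𝓝 (V (y + s)))) :
    Tendsto (fun i => translateAvg ν (F i) (u i)) l (𝓝 (translateAvg ν V y)) :=
  tendsto_integral_filter_of_dominated_convergence (fun _ => 1)
    (.of_forall fun i => ((hF i).integrable_comp_add_left ν (u i)).aestronglyMeasurable)
    (.of_forall fun i => .of_forall fun _ => (hF i).abs_le_one _)
    (integrable_const 1) (.of_forall h)

end TranslateAvg

section ExpAverage

variable {r : ℝ} {U W : ℝ → ℝ}

theorem translateAvg_expMeasure (hr : 0 < r) (U : ℝ → ℝ) (x : ℝ) :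
    translateAvg (expMeasure r) U x =
      Real.exp (r * x) * ∫ s in Ioi x, r * Real.exp (-(r * s)) * U s := by
  have hdensity : ∀ s, (exponentialPDF r s).toReal • U (x + s) = (Ici x).indicator
      (fun t => Real.exp (r * x) * (r * Real.exp (-(r * t)) * U t)) (x + s) := by
    intro s
    rw [exponentialPDF_eq, ENNReal.toReal_ofReal (by split_ifs <;> positivity), smul_eq_mul]
    by_cases hs : 0 ≤ s
    · rw [if_pos hs, indicator_of_mem (by simpa using hs), ← mul_assoc, mul_left_comm,
        ← Real.exp_add]
      ring_nf
    · rw [if_neg hs, indicator_of_notMem (by simpa using hs), zero_mul]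
  calc translateAvg (expMeasure r) U x
    _ = ∫ s, (exponentialPDF r s).toReal • U (x + s) :=
        integral_withDensity_eq_integral_toReal_smul
          (measurable_exponentialPDFReal r).ennreal_ofReal
          (.of_forall fun _ => ENNReal.ofReal_lt_top) _
    _ = Real.exp (r * x) * ∫ s in Ioi x, r * Real.exp (-(r * s)) * U s := by
        rw [integral_congr_ae (.of_forall hdensity), integral_add_left_eq_self,
          integral_indicator measurableSet_Ici, integral_Ici_eq_integral_Ioi, integral_const_mul]

theorem integrableOn_exp_neg_mul_mul (hr : 0 < r) (hU : Measurable U)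
    (hU' : ∀ s, U s ∈ Icc (0 : ℝ) 1) (x : ℝ) :
    IntegrableOn (fun s => r * Real.exp (-(r * s)) * U s) (Ioi x) := by
  have hexp : IntegrableOn (fun s => r * Real.exp (-(r * s))) (Ioi x) := by
    simp only [← neg_mul]
    exact (integrableOn_exp_mul_Ioi (neg_lt_zero.2 hr) x).const_mul r
  refine hexp.mul_bdd (c := 1) hU.aestronglyMeasurable (.of_forall fun s => ?_)
  rw [Real.norm_of_nonneg (hU' s).1]
  exact (hU' s).2

theorem antitone_exp_neg_mul_translateAvg (hr : 0 < r) (hU : Measurable U)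
    (hU' : ∀ s, U s ∈ Icc (0 : ℝ) 1) :
    Antitone fun x => Real.exp (-(r * x)) * translateAvg (expMeasure r) U x := by
  intro x y hxy
  simp only [translateAvg_expMeasure hr, ← mul_assoc, ← Real.exp_add, neg_add_cancel, Real.exp_zero,
    one_mul]
  exact setIntegral_mono_set (integrableOn_exp_neg_mul_mul hr hU hU' x)
    (.of_forall fun s => mul_nonneg (by positivity) (hU' s).1)
    (Ioi_subset_Ioi hxy).eventuallyLE

theorem lipschitzWith_translateAvg_expMeasure (hr : 0 < r) (hU : IsProfile U) :
    LipschitzWith r.toNNReal (translateAvg (expMeasure r) U) := by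
  have : IsProbabilityMeasure (expMeasure r) := isProbabilityMeasure_expMeasure hr
  set A := translateAvg (expMeasure r) U
  have hA : IsProfile A := hU.translateAvg
  have hcompl : ∀ x, translateAvg (expMeasure r) (fun s => 1 - U s) x = 1 - A x := fun x => by
    simp only [translateAvg, A]
    rw [integral_sub (integrable_const 1) (hU.integrable_comp_add_left _ x)]
    simp
  have hanti : Antitone fun x => Real.exp (-(r * x)) * (1 - A x) := by
    simpa only [hcompl] using antitone_exp_neg_mul_translateAvg hr (hU.measurable.const_sub 1)
      fun s => ⟨sub_nonneg.2 (hU.mem_Icc s).2, sub_le_self 1 (hU.mem_Icc s).1⟩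
  refine .of_le_add_mul _ fun x y => ?_
  rw [Real.coe_toNNReal r hr.le, Real.dist_eq]
  rcases le_total y x with hyx | hxy
  · exact (hA.antitone hyx).trans (le_add_of_nonneg_right (by positivity))
  · have hexp : 1 - r * (y - x) ≤ Real.exp (-(r * (y - x))) := Real.one_sub_le_exp_neg _
    have hA' : Real.exp (-(r * (y - x))) * (1 - A y) ≤ 1 - A x := by
      refine le_of_mul_le_mul_left ?_ (Real.exp_pos (-(r * x)))
      rw [← mul_assoc, ← Real.exp_add]
      convert hanti hxy using 3
      ring_nf
    rw [abs_sub_comm, abs_of_nonneg (sub_nonneg.2 hxy)]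
    linarith [mul_le_mul_of_nonneg_right hexp (sub_nonneg.2 (hA.mem_Icc y).2),
      mul_nonneg (mul_nonneg hr.le (sub_nonneg.2 hxy)) (hA.mem_Icc y).1]

theorem hasDerivAt_setIntegral_Ioi {h : ℝ → ℝ} (hh : Continuous h)
    (hint : ∀ a, IntegrableOn h (Ioi a)) (x : ℝ) :
    HasDerivAt (fun x => ∫ s in Ioi x, h s) (-h x) x := by
  have hsplit : (fun x => ∫ s in Ioi x, h s) =
      fun x => (∫ s in Ioi 0, h s) - ∫ s in (0)..x, h s := by
    funext y
    rw [← intervalIntegral.integral_interval_add_Ioi (hint 0) (hint y), add_sub_cancel_left]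
  rw [hsplit]
  exact (intervalIntegral.integral_hasDerivAt_right (hh.intervalIntegrable 0 x)
    (hh.stronglyMeasurableAtFilter _ _) hh.continuousAt).const_sub _

theorem hasDerivAt_translateAvg_expMeasure (hr : 0 < r) (hU : IsProfile U) (hc : Continuous U)
    (x : ℝ) : HasDerivAt (translateAvg (expMeasure r) U)
      (r * (translateAvg (expMeasure r) U x - U x)) x := by
  have hderiv := ((hasDerivAt_id x).const_mul r).exp.mul (hasDerivAt_setIntegral_Ioi
    (h := fun s => r * Real.exp (-(r * s)) * U s) (by fun_prop)
    (integrableOn_exp_neg_mul_mul hr hU.measurable hU.mem_Icc) x)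
  rw [funext (translateAvg_expMeasure hr U)]
  refine hderiv.congr_deriv ?_
  have hinv : Real.exp (r * x) * Real.exp (-(r * x)) = 1 := by rw [← Real.exp_add]; simp
  simp only [id_eq]
  linear_combination (-(r * U x)) * hinv

theorem antitoneOn_exp_neg_mul_of_deriv_le {y : ℝ → ℝ} {a : ℝ} (hy : Differentiable ℝ y)
    (h : ∀ x, a ≤ x → deriv y x ≤ r * y x) :
    AntitoneOn (fun x => Real.exp (-(r * x)) * y x) (Ici a) := by
  have hderiv : ∀ x, HasDerivAt (fun x => Real.exp (-(r * x)) * y x)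
      (Real.exp (-(r * x)) * (deriv y x - r * y x)) x := fun x =>
    (((hasDerivAt_id x).const_mul r).neg.exp.mul (hy x).hasDerivAt).congr_deriv (by
      simp only [Pi.neg_apply, id_eq]; ring)
  have hdiff : Differentiable ℝ fun x => Real.exp (-(r * x)) * y x :=
    fun x => (hderiv x).differentiableAt
  refine antitoneOn_of_deriv_nonpos (convex_Ici a) hdiff.continuous.continuousOn
    hdiff.differentiableOn fun x hx => ?_
  rw [(hderiv x).deriv]
  exact mul_nonpos_of_nonneg_of_nonpos (Real.exp_pos _).le
    (sub_nonpos.2 (h x (interior_subset hx)))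

theorem le_add_of_deriv_sub_le {u v : ℝ → ℝ} {C ε : ℝ} (hr : 0 < r) (hu : Differentiable ℝ u)
    (hv : Differentiable ℝ v) (hCu : ∀ x, |u x| ≤ C) (hCv : ∀ x, |v x| ≤ C)
    (h : ∀ x, deriv u x - deriv v x ≤ r * (u x - v x + ε)) (x : ℝ) : v x ≤ u x + ε := by
  set y := fun t => u t - v t + ε
  have hy : ∀ t, HasDerivAt y (deriv u t - deriv v t) t := fun t =>
    ((hu t).hasDerivAt.sub (hv t).hasDerivAt).add_const ε
  have hbdd : ∀ t, |y t| ≤ C + C + |ε| := fun t =>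
    (abs_add_le _ _).trans (add_le_add_left ((abs_sub _ _).trans (add_le_add (hCu t) (hCv t))) _)
  have hlim : Tendsto (fun t => Real.exp (-(r * t)) * y t) atTop (𝓝 0) :=
    (Real.tendsto_exp_neg_atTop_nhds_zero.comp (tendsto_id.const_mul_atTop hr)
      ).zero_mul_isBoundedUnder_le (isBoundedUnder_of ⟨_, hbdd⟩)
  have hanti := antitoneOn_exp_neg_mul_of_deriv_le (r := r) (a := x)
    (fun t => (hy t).differentiableAt) fun t _ => (hy t).deriv.trans_le (h t)
  have hy₀ : 0 ≤ u x - v x + ε := by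
    refine nonneg_of_mul_nonneg_right (le_of_tendsto hlim ?_) (Real.exp_pos (-(r * x)))
    filter_upwards [eventually_ge_atTop x] with t ht using hanti self_mem_Ici ht ht
  linarith

variable (hr : 0 < r) (hU : IsProfile U) (hUc : Continuous U) (hW : IsProfile W)
  (hWd : Differentiable ℝ W)
include hr hU hUc hW hWd

theorem translateAvg_expMeasure_le_add {ε : ℝ} (h : ∀ x, deriv W x ≤ r * (W x - U x + ε)) (x : ℝ) :
    translateAvg (expMeasure r) U x ≤ W x + ε := by
  have : IsProbabilityMeasure (expMeasure r) := isProbabilityMeasure_expMeasure hr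
  have hA := hasDerivAt_translateAvg_expMeasure hr hU hUc
  refine le_add_of_deriv_sub_le hr hWd (fun t => (hA t).differentiableAt) hW.abs_le_one
    hU.translateAvg.abs_le_one (fun t => ?_) x
  rw [(hA t).deriv]
  linarith [h t]

theorem le_translateAvg_expMeasure_add {ε : ℝ} (h : ∀ x, r * (W x - U x - ε) ≤ deriv W x) (x : ℝ) :
    W x ≤ translateAvg (expMeasure r) U x + ε := by
  have : IsProbabilityMeasure (expMeasure r) := isProbabilityMeasure_expMeasure hr
  have hA := hasDerivAt_translateAvg_expMeasure hr hU hUc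
  refine le_add_of_deriv_sub_le hr (fun t => (hA t).differentiableAt) hWd
    hU.translateAvg.abs_le_one hW.abs_le_one (fun t => ?_) x
  rw [(hA t).deriv]
  linarith [h t]

end ExpAverage

/-! ### The monotone operator -/

/-- A monostable nonlinearity: Lipschitz on `[0, 1]` with constant `L`, vanishing at `0` and `1` and
positive in between. -/
structure IsMonostable (g : ℝ → ℝ) (L : ℝ≥0) : Prop where
  lipschitz : LipschitzOnWith L g (Icc 0 1)
  map_zero : g 0 = 0
  map_one : g 1 = 0
  pos : ∀ w ∈ Ioo (0 : ℝ) 1, 0 < g w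

theorem monotoneOn_mul_add_of_lipschitzOnWith {g : ℝ → ℝ} {L : ℝ≥0} {s : Set ℝ}
    (hg : LipschitzOnWith L g s) : MonotoneOn (fun w => L * w + g w) s := by
  intro x hx y hy hxy
  have h := (abs_le.1 (hg.dist_le_mul y hy x hx)).1
  rw [Real.dist_eq, abs_of_nonneg (sub_nonneg.2 hxy)] at h
  simp only
  linarith

/-- The reaction-dispersal step `(μ ⋆ W + L W + g(W)) / (L + 1)`. With `r = (L + 1) / c`, the front
equation reads `W' = r (W - reactStep μ g L W)`; the shift by `L` makes the step monotone in `W`. -/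
def reactStep (μ : Measure ℝ) (g : ℝ → ℝ) (L : ℝ≥0) (W : ℝ → ℝ) (x : ℝ) : ℝ :=
  (translateAvg μ W x + (L * W x + g (W x))) / (L + 1)

/-- The operator whose fixed points are the fronts of speed `c`: the solution operator of
`V' = r (V - reactStep μ g L W)` with `r = (L + 1) / c`. -/
def waveMap (μ : Measure ℝ) (g : ℝ → ℝ) (L : ℝ≥0) (c : ℝ) (W : ℝ → ℝ) : ℝ → ℝ :=
  translateAvg (expMeasure ((L + 1) / c)) (reactStep μ g L W)

section WaveMap

variable {μ : Measure ℝ} {g : ℝ → ℝ} {L : ℝ≥0} {c : ℝ} {U V W : ℝ → ℝ}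

theorem reactStep_comp_add_right (a x : ℝ) :
    reactStep μ g L (fun y => W (y + a)) x = reactStep μ g L W (x + a) := by
  simp only [reactStep, translateAvg_comp_add_right]

theorem waveMap_comp_add_right (a x : ℝ) :
    waveMap μ g L c (fun y => W (y + a)) x = waveMap μ g L c W (x + a) := by
  simp only [waveMap, funext (reactStep_comp_add_right (μ := μ) (g := g) (L := L) (W := W) a),
    translateAvg_comp_add_right]

theorem reactStep_le_reactStep_add {g' : ℝ → ℝ} {x δ : ℝ} (h : g (W x) ≤ g' (W x) + δ) :
    reactStep μ g L W x ≤ reactStep μ g' L W x + δ / (L + 1) := by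
  rw [reactStep, reactStep, ← add_div]
  exact div_le_div_of_nonneg_right (by linarith) (by positivity)

variable [IsProbabilityMeasure μ]

theorem reactStep_const (a x : ℝ) : reactStep μ g L (fun _ => a) x = a + g a / (L + 1) := by
  have : (L : ℝ) + 1 ≠ 0 := by positivity
  rw [reactStep, translateAvg_const]
  field_simp
  ring

theorem reactStep_le_reactStep (hg : LipschitzOnWith L g (Icc 0 1)) (hU : IsProfile U)
    (hV : IsProfile V) {x y : ℝ} (h : ∀ s, U (x + s) ≤ V (y + s)) :
    reactStep μ g L U x ≤ reactStep μ g L V y := by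
  have h₀ : U x ≤ V y := by simpa only [add_zero] using h 0
  exact div_le_div_of_nonneg_right (add_le_add (translateAvg_le_translateAvg hU hV h)
    (monotoneOn_mul_add_of_lipschitzOnWith hg (hU.mem_Icc x) (hV.mem_Icc y) h₀)) (by positivity)

theorem tendsto_reactStep {ι : Type*} {l : Filter ι} [l.IsCountablyGenerated] {F : ι → ℝ → ℝ}
    {u : ι → ℝ} {y : ℝ} (hg : ContinuousOn g (Icc 0 1)) (hF : ∀ i, IsProfile (F i))
    (hV : IsProfile V) (h : ∀ s, Tendsto (fun i => F i (u i + s)) l (𝓝 (V (y + s)))) :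
    Tendsto (fun i => reactStep μ g L (F i) (u i)) l (𝓝 (reactStep μ g L V y)) := by
  have h₀ : Tendsto (fun i => F i (u i)) l (𝓝 (V y)) := by simpa only [add_zero] using h 0
  have hgF : Tendsto (fun i => g (F i (u i))) l (𝓝 (g (V y))) :=
    (hg (V y) (hV.mem_Icc y)).tendsto.comp
      (tendsto_nhdsWithin_iff.2 ⟨h₀, .of_forall fun i => (hF i).mem_Icc _⟩)
  exact ((tendsto_translateAvg hF h).add ((h₀.const_mul _).add hgF)).div_const _

theorem continuous_reactStep (hg : ContinuousOn g (Icc 0 1)) (hW : IsProfile W)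
    (hWc : Continuous W) : Continuous (reactStep μ g L W) :=
  continuous_iff_continuousAt.2 fun x => tendsto_reactStep hg (fun _ => hW) hW fun s =>
    (hWc.comp (continuous_add_const s)).tendsto x

namespace IsMonostable

theorem eq_zero_or_eq_one (hg : IsMonostable g L) {w : ℝ} (hw : w ∈ Icc (0 : ℝ) 1) (h : g w ≤ 0) :
    w = 0 ∨ w = 1 := by
  by_contra! hne
  exact h.not_gt (hg.pos w ⟨hw.1.lt_of_ne' hne.1, hw.2.lt_of_ne hne.2⟩)

theorem isProfile_reactStep (hg : IsMonostable g L) (hW : IsProfile W) :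
    IsProfile (reactStep μ g L W) where
  antitone _ _ hxy := reactStep_le_reactStep hg.lipschitz hW hW fun s =>
    hW.antitone (add_le_add_left hxy s)
  mem_Icc x := by
    have h₀ := reactStep_le_reactStep (μ := μ) (x := x) (y := x) hg.lipschitz (.const (by simp)) hW
      fun s => (hW.mem_Icc (x + s)).1
    have h₁ := reactStep_le_reactStep (μ := μ) (x := x) (y := x) hg.lipschitz hW (.const (by simp))
      fun s => (hW.mem_Icc (x + s)).2
    simp only [reactStep_const, hg.map_zero, hg.map_one, zero_div, add_zero] at h₀ h₁
    exact ⟨h₀, h₁⟩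

variable (hg : IsMonostable g L) (hc : 0 < c)
include hg hc

theorem isProfile_waveMap (hW : IsProfile W) : IsProfile (waveMap μ g L c W) :=
  have : IsProbabilityMeasure (expMeasure ((L + 1) / c)) :=
    isProbabilityMeasure_expMeasure (by positivity)
  (hg.isProfile_reactStep hW).translateAvg

theorem waveMap_mono (hU : IsProfile U) (hV : IsProfile V) (h : U ≤ V) :
    waveMap μ g L c U ≤ waveMap μ g L c V := fun _ =>
  have : IsProbabilityMeasure (expMeasure ((L + 1) / c)) :=
    isProbabilityMeasure_expMeasure (by positivity)
  translateAvg_le_translateAvg (hg.isProfile_reactStep hU) (hg.isProfile_reactStep hV) fun _ =>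
    reactStep_le_reactStep hg.lipschitz hU hV fun _ => h _

theorem lipschitzWith_waveMap (hW : IsProfile W) :
    LipschitzWith ((L + 1) / c).toNNReal (waveMap μ g L c W) :=
  lipschitzWith_translateAvg_expMeasure (by positivity) (hg.isProfile_reactStep hW)

theorem hasDerivAt_waveMap (hW : IsProfile W) (hWc : Continuous W) (x : ℝ) :
    HasDerivAt (waveMap μ g L c W)
      ((L + 1) / c * (waveMap μ g L c W x - reactStep μ g L W x)) x :=
  hasDerivAt_translateAvg_expMeasure (by positivity) (hg.isProfile_reactStep hW)
    (continuous_reactStep hg.lipschitz.continuousOn hW hWc) x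

theorem tendsto_waveMap {ι : Type*} {l : Filter ι} [l.IsCountablyGenerated] {F : ι → ℝ → ℝ}
    {u : ι → ℝ} {y : ℝ} (hF : ∀ i, IsProfile (F i)) (hV : IsProfile V)
    (h : ∀ s, Tendsto (fun i => F i (u i + s)) l (𝓝 (V (y + s)))) :
    Tendsto (fun i => waveMap μ g L c (F i) (u i)) l (𝓝 (waveMap μ g L c V y)) := by
  have : IsProbabilityMeasure (expMeasure ((L + 1) / c)) :=
    isProbabilityMeasure_expMeasure (by positivity)
  refine tendsto_translateAvg (fun i => hg.isProfile_reactStep (hF i)) fun s =>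
    tendsto_reactStep hg.lipschitz.continuousOn hF hV fun t => ?_
  simpa only [add_assoc] using h (s + t)

theorem tendsto_waveMap_const {l : Filter ℝ} [l.IsCountablyGenerated]
    (hl : ∀ s, Tendsto (· + s) l l) (hW : IsProfile W) {a : ℝ} (ha : a ∈ Icc (0 : ℝ) 1)
    (h : Tendsto W l (𝓝 a)) : Tendsto (waveMap μ g L c W) l (𝓝 (a + g a / (L + 1))) := by
  have : IsProbabilityMeasure (expMeasure ((L + 1) / c)) :=
    isProbabilityMeasure_expMeasure (by positivity)
  have hconst : waveMap μ g L c (fun _ => a) 0 = a + g a / (L + 1) := by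
    simp only [waveMap, funext (reactStep_const (μ := μ) (g := g) (L := L) a), translateAvg_const]
  rw [← hconst]
  exact hg.tendsto_waveMap hc (fun _ => hW) (.const ha) fun s => h.comp (hl s)

theorem limit_eq_zero_or_one {l : Filter ℝ} [l.NeBot] [l.IsCountablyGenerated]
    (hl : ∀ s, Tendsto (· + s) l l) (hW : IsProfile W) (hle : waveMap μ g L c W ≤ W) {a : ℝ}
    (h : Tendsto W l (𝓝 a)) : a = 0 ∨ a = 1 := by
  have ha : a ∈ Icc (0 : ℝ) 1 := isClosed_Icc.mem_of_tendsto h (.of_forall hW.mem_Icc)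
  have hga := le_of_tendsto_of_tendsto' (hg.tendsto_waveMap_const (μ := μ) hc hl hW ha h) h hle
  have hdiv : g a / (L + 1) ≤ 0 := by linarith
  have hga₀ : g a ≤ 0 := by simpa only [zero_mul] using (div_le_iff₀ (by positivity)).1 hdiv
  exact hg.eq_zero_or_eq_one ha hga₀

theorem tendsto_atBot_one (hW : IsProfile W) (hle : waveMap μ g L c W ≤ W) {x : ℝ} (hx : 0 < W x) :
    Tendsto W atBot (𝓝 1) := by
  have hbdd : BddAbove (range W) := ⟨1, forall_mem_range.2 fun y => (hW.mem_Icc y).2⟩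
  have hlim := tendsto_atBot_ciSup hW.antitone hbdd
  rcases hg.limit_eq_zero_or_one hc (fun s => tendsto_atBot_add_const_right _ s tendsto_id)
    hW hle hlim with h | h
  · exact absurd (hx.trans_le (le_ciSup hbdd x)) h.not_gt
  · rwa [h] at hlim

theorem tendsto_atTop_zero (hW : IsProfile W) (hle : waveMap μ g L c W ≤ W) {x : ℝ} (hx : W x < 1) :
    Tendsto W atTop (𝓝 0) := by
  have hbdd : BddBelow (range W) := ⟨0, forall_mem_range.2 fun y => (hW.mem_Icc y).1⟩
  have hlim := tendsto_atTop_ciInf hW.antitone hbdd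
  rcases hg.limit_eq_zero_or_one hc (fun s => tendsto_atTop_add_const_right _ s tendsto_id)
    hW hle hlim with h | h
  · rwa [h] at hlim
  · exact absurd ((ciInf_le hbdd x).trans_lt hx) h.not_lt

end IsMonostable

end WaveMap

/-! ### The dispersal kernel -/

/-- The dispersal kernel as a measure, so that `J ⋆ W` becomes an average of translates of `W`. -/
def kernelMeasure (J : ℝ → ℝ) : Measure ℝ := volume.withDensity fun x => ENNReal.ofReal (J x)

namespace IsKernel

variable {J : ℝ → ℝ} (hJ : IsKernel J)
include hJ

theorem continuous : Continuous J := hJ.1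

theorem nonneg (x : ℝ) : 0 ≤ J x := hJ.2.1 x

theorem neg (x : ℝ) : J (-x) = J x := hJ.2.2.1 x

theorem hasCompactSupport : HasCompactSupport J := hJ.2.2.2.1

theorem integral_eq_one : ∫ x, J x = 1 := hJ.2.2.2.2

theorem integrable_mul {h : ℝ → ℝ} (hh : Continuous h) : Integrable fun x => J x * h x :=
  (hJ.continuous.mul hh).integrable_of_hasCompactSupport hJ.hasCompactSupport.mul_right

theorem integrable : Integrable J :=
  hJ.continuous.integrable_of_hasCompactSupport hJ.hasCompactSupport

theorem isProbabilityMeasure : IsProbabilityMeasure (kernelMeasure J) := by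
  refine ⟨?_⟩
  rw [kernelMeasure, withDensity_apply _ .univ, setLIntegral_univ,
    ← ofReal_integral_eq_lintegral_ofReal hJ.integrable (.of_forall hJ.nonneg),
    hJ.integral_eq_one, ENNReal.ofReal_one]

theorem translateAvg_kernelMeasure (W : ℝ → ℝ) (x : ℝ) :
    translateAvg (kernelMeasure J) W x = ∫ y, J (x - y) * W y := by
  rw [← integral_add_left_eq_self _ x, translateAvg, kernelMeasure,
    integral_withDensity_eq_integral_toReal_smul hJ.continuous.measurable.ennreal_ofReal
      (.of_forall fun _ => ENNReal.ofReal_lt_top)]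
  simp only [ENNReal.toReal_ofReal (hJ.nonneg _), smul_eq_mul, sub_add_cancel_left, hJ.neg]

theorem kernelMeasure_Iio_ne_zero : kernelMeasure J (Iio 0) ≠ 0 := by
  intro h
  have hopen : IsOpen ({x | 0 < J x} ∩ Iio 0) :=
    (isOpen_lt continuous_const hJ.continuous).inter isOpen_Iio
  have hempty : {x | 0 < J x} ∩ Iio 0 = ∅ := by
    refine (hopen.measure_eq_zero_iff volume).1 ?_
    simpa only [kernelMeasure, ne_eq, ENNReal.ofReal_eq_zero, not_le] using
      (withDensity_apply_eq_zero hJ.continuous.measurable.ennreal_ofReal).1 h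
  have hneg : ∀ x < 0, J x = 0 := fun x hx =>
    (not_lt.1 fun hpos => (hempty.subset ⟨hpos, hx⟩ : x ∈ (∅ : Set ℝ))).antisymm (hJ.nonneg x)
  have hae : J =ᵐ[volume] 0 := by
    filter_upwards [compl_mem_ae_iff.2 (measure_singleton (0 : ℝ))] with x hx
    rcases lt_or_gt_of_ne hx with hx | hx
    · exact hneg x hx
    · exact (hJ.neg x).symm.trans (hneg (-x) (neg_lt_zero.2 hx))
  exact zero_ne_one ((integral_eq_zero_of_ae hae).symm.trans hJ.integral_eq_one)

theorem front_equation_iff {g W : ℝ → ℝ} {c : ℝ} (hc : c ≠ 0) (L : ℝ≥0) (ξ d : ℝ) :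
    (∫ y, J (ξ - y) * W y) - W ξ + c * d + g (W ξ) = 0 ↔
      d = (L + 1) / c * (W ξ - reactStep (kernelMeasure J) g L W ξ) := by
  have : (L : ℝ) + 1 ≠ 0 := by positivity
  rw [reactStep, hJ.translateAvg_kernelMeasure]
  field_simp
  constructor <;> intro h <;> linarith

theorem integral_mul_id : ∫ x, J x * x = 0 := by
  have hodd : ∫ x, J x * x = -∫ x, J x * x := by
    rw [← integral_neg, ← integral_neg_eq_self]
    simp only [hJ.neg, mul_neg]
  linarith

theorem one_le_integral_mul_exp (l : ℝ) : 1 ≤ ∫ x, J x * Real.exp (l * x) := by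
  have hlin : Integrable fun x => l * (J x * x) := (hJ.integrable_mul continuous_id).const_mul l
  calc (1 : ℝ) = ∫ x, (J x + l * (J x * x)) := by
        rw [integral_add hJ.integrable hlin, integral_const_mul, hJ.integral_mul_id,
          hJ.integral_eq_one, mul_zero, add_zero]
    _ ≤ ∫ x, J x * Real.exp (l * x) := by
        refine integral_mono (hJ.integrable.add hlin) (hJ.integrable_mul (by fun_prop)) fun x => ?_
        linarith [mul_le_mul_of_nonneg_left (Real.add_one_le_exp (l * x)) (hJ.nonneg x)]

theorem c0star_nonneg {γ₀ : ℝ} (hγ₀ : 0 ≤ γ₀) : 0 ≤ c0star J γ₀ := by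
  refine Real.sInf_nonneg ?_
  rintro _ ⟨l, hl, rfl⟩
  exact div_nonneg (by linarith [hJ.one_le_integral_mul_exp l]) (mem_Ioi.1 hl).le

end IsKernel

/-! ### From fixed points to fronts -/

section FixedPoint

variable {μ : Measure ℝ} [IsProbabilityMeasure μ] {g : ℝ → ℝ} {L : ℝ≥0} {c : ℝ} {V : ℝ → ℝ}
  (hg : IsMonostable g L) (hc : 0 < c) (hV : IsProfile V) (hfix : waveMap μ g L c V = V)
include hg hc hV hfix

theorem hasDerivAt_of_waveMap_eq (x : ℝ) :
    HasDerivAt V ((L + 1) / c * (V x - reactStep μ g L V x)) x := by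
  have hVc : Continuous V := hfix ▸ (hg.lipschitzWith_waveMap hc hV).continuous
  simpa only [hfix] using hg.hasDerivAt_waveMap (μ := μ) hc hV hVc x

theorem pos_of_waveMap_eq (hμ : μ (Iio 0) ≠ 0) (h₁ : Tendsto V atBot (𝓝 1)) (x : ℝ) : 0 < V x := by
  have hderiv := hasDerivAt_of_waveMap_eq hg hc hV hfix
  have hVc : Continuous V := continuous_iff_continuousAt.2 fun x => (hderiv x).continuousAt
  by_contra! hx
  obtain ⟨b, hb⟩ := eventually_atBot.1 (h₁.eventually (lt_mem_nhds one_pos))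
  have hbdd : BddBelow {y | V y ≤ 0} := ⟨b, fun y hy => not_lt.1 fun hyb =>
    (hb y hyb.le).not_ge hy⟩
  set z := sInf {y | V y ≤ 0}
  have hz : V z = 0 := le_antisymm
    ((isClosed_le hVc continuous_const).csInf_mem ⟨x, hx⟩ hbdd) (hV.mem_Icc z).1
  have hmin : IsLocalMin V z := .of_forall fun y => hz.trans_le (hV.mem_Icc y).1
  have havg : ∫ s, V (z + s) ∂μ = 0 := by
    have hr : (L + 1) / c ≠ (0 : ℝ) := by positivity
    have hL : (L : ℝ) + 1 ≠ 0 := by positivity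
    have hstep := (mul_eq_zero.1 (hmin.hasDerivAt_eq_zero (hderiv z))).resolve_left hr
    simpa [reactStep, hz, hg.map_zero, hL, translateAvg] using hstep
  have hae := (integral_eq_zero_iff_of_nonneg (fun s => (hV.mem_Icc (z + s)).1)
    (hV.integrable_comp_add_left μ z)).1 havg
  refine hμ (measure_mono_null (fun s hs => ?_) hae)
  exact fun hs₀ => (csInf_le hbdd (show V (z + s) ≤ 0 from hs₀.le)).not_gt (by
    linarith [mem_Iio.1 hs])

theorem deriv_neg_of_waveMap_eq (hpos : ∀ x, 0 < V x) (h₀ : Tendsto V atTop (𝓝 0)) (x : ℝ) :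
    deriv V x < 0 := by
  have hderiv := hasDerivAt_of_waveMap_eq hg hc hV hfix
  refine lt_of_le_of_ne hV.antitone.deriv_nonpos fun hx => ?_
  have hr : 0 < ((L : ℝ) + 1) / c := by positivity
  have hstep : reactStep μ g L V x = V x := by
    rw [(hderiv x).deriv] at hx
    linarith [(mul_eq_zero.1 hx).resolve_left hr.ne']
  have hgap : ∀ t, HasDerivAt (fun t => V x - V t)
      (-((L + 1) / c * (V t - reactStep μ g L V t))) t := fun t => (hderiv t).const_sub (V x)
  have hanti := antitoneOn_exp_neg_mul_of_deriv_le (r := (L + 1) / c) (a := x)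
    (fun t => (hgap t).differentiableAt) fun t ht => by
      rw [(hgap t).deriv, ← mul_neg]
      have := (hg.isProfile_reactStep (μ := μ) hV).antitone ht
      exact mul_le_mul_of_nonneg_left (by linarith) hr.le
  have hge : ∀ t, x ≤ t → V x ≤ V t := fun t ht => by
    have := hanti self_mem_Ici ht ht
    simp only [sub_self, mul_zero] at this
    exact sub_nonpos.1 (nonpos_of_mul_nonpos_right this (Real.exp_pos _))
  exact (hpos x).not_ge (ge_of_tendsto h₀ ((eventually_ge_atTop x).mono hge))

end FixedPoint

section Fronts

variable {J g : ℝ → ℝ} {L : ℝ≥0} {c : ℝ} {W : ℝ → ℝ}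

theorem isNLFront_of_waveMap_eq (hJ : IsKernel J) (hg : IsMonostable g L) (hc : 0 < c)
    (hW : IsProfile W) (hfix : waveMap (kernelMeasure J) g L c W = W) {x : ℝ}
    (hx : W x ∈ Ioo (0 : ℝ) 1) : IsNLFront J g c W := by
  have := hJ.isProbabilityMeasure
  have h₁ := hg.tendsto_atBot_one hc hW hfix.le hx.1
  have h₀ := hg.tendsto_atTop_zero hc hW hfix.le hx.2
  have hpos := pos_of_waveMap_eq hg hc hW hfix hJ.kernelMeasure_Iio_ne_zero h₁
  have hderiv := hasDerivAt_of_waveMap_eq hg hc hW hfix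
  have hWc : Continuous W := continuous_iff_continuousAt.2 fun x => (hderiv x).continuousAt
  refine ⟨contDiff_one_iff_deriv.2 ⟨fun x => (hderiv x).differentiableAt, ?_⟩, fun ξ => ?_, h₁, h₀,
    deriv_neg_of_waveMap_eq hg hc hW hfix hpos h₀⟩
  · rw [funext fun x => (hderiv x).deriv]
    exact continuous_const.mul (hWc.sub (continuous_reactStep hg.lipschitz.continuousOn hW hWc))
  · exact (hJ.front_equation_iff hc.ne' L ξ _).2 (hderiv ξ).deriv

namespace IsNLFront

theorem contDiff (h : IsNLFront J g c W) : ContDiff ℝ 1 W := h.1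

theorem differentiable (h : IsNLFront J g c W) : Differentiable ℝ W :=
  h.contDiff.differentiable one_ne_zero

theorem equation (h : IsNLFront J g c W) (ξ : ℝ) :
    (∫ y, J (ξ - y) * W y) - W ξ + c * deriv W ξ + g (W ξ) = 0 := h.2.1 ξ

theorem tendsto_atBot (h : IsNLFront J g c W) : Tendsto W atBot (𝓝 1) := h.2.2.1

theorem tendsto_atTop (h : IsNLFront J g c W) : Tendsto W atTop (𝓝 0) := h.2.2.2.1

theorem deriv_neg (h : IsNLFront J g c W) (ξ : ℝ) : deriv W ξ < 0 := h.2.2.2.2 ξ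

theorem isProfile (h : IsNLFront J g c W) : IsProfile W := by
  have hanti : Antitone W :=
    antitone_of_deriv_nonpos h.differentiable fun x => (h.deriv_neg x).le
  exact ⟨hanti, fun x =>
    ⟨hanti.le_of_tendsto h.tendsto_atTop x, hanti.ge_of_tendsto h.tendsto_atBot x⟩⟩

variable {g' : ℝ → ℝ} {δ : ℝ}

theorem waveMap_le_add (hJ : IsKernel J) (hg : IsMonostable g L) (hc : 0 < c)
    (h : IsNLFront J g' c W) (hle : ∀ w ∈ Icc (0 : ℝ) 1, g w ≤ g' w + δ) (x : ℝ) :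
    waveMap (kernelMeasure J) g L c W x ≤ W x + δ / (L + 1) := by
  have := hJ.isProbabilityMeasure
  refine translateAvg_expMeasure_le_add (by positivity) (hg.isProfile_reactStep h.isProfile)
    (continuous_reactStep hg.lipschitz.continuousOn h.isProfile h.contDiff.continuous) h.isProfile
    h.differentiable (fun t => ?_) x
  rw [(hJ.front_equation_iff hc.ne' L t _).1 (h.equation t)]
  refine mul_le_mul_of_nonneg_left ?_ (by positivity)
  linarith [reactStep_le_reactStep_add (μ := kernelMeasure J) (L := L)
    (hle (W t) (h.isProfile.mem_Icc t))]

theorem le_waveMap_add (hJ : IsKernel J) (hg : IsMonostable g L) (hc : 0 < c)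
    (h : IsNLFront J g' c W) (hle : ∀ w ∈ Icc (0 : ℝ) 1, g' w ≤ g w + δ) (x : ℝ) :
    W x ≤ waveMap (kernelMeasure J) g L c W x + δ / (L + 1) := by
  have := hJ.isProbabilityMeasure
  refine le_translateAvg_expMeasure_add (by positivity) (hg.isProfile_reactStep h.isProfile)
    (continuous_reactStep hg.lipschitz.continuousOn h.isProfile h.contDiff.continuous) h.isProfile
    h.differentiable (fun t => ?_) x
  rw [(hJ.front_equation_iff hc.ne' L t _).1 (h.equation t)]
  refine mul_le_mul_of_nonneg_left ?_ (by positivity)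
  linarith [reactStep_le_reactStep_add (μ := kernelMeasure J) (L := L)
    (hle (W t) (h.isProfile.mem_Icc t))]

theorem mem_Ioo (h : IsNLFront J g c W) (x : ℝ) : W x ∈ Ioo (0 : ℝ) 1 := by
  have hanti : StrictAnti W := strictAnti_of_deriv_neg h.deriv_neg
  exact ⟨(h.isProfile.mem_Icc (x + 1)).1.trans_lt (hanti (lt_add_one x)),
    (hanti (sub_one_lt x)).trans_le (h.isProfile.mem_Icc (x - 1)).2⟩

end IsNLFront

end Fronts

/-! ### Existence and stability of fronts -/

theorem exists_subseq_tendsto_of_lipschitzWith {X E : Type*} [PseudoMetricSpace X] [ProperSpace X]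
    [PseudoEMetricSpace E] {K : ℝ≥0} {s : Set E} (hs : IsCompact s) {F : ℕ → X → E}
    (hF : ∀ n, LipschitzWith K (F n)) (hFs : ∀ n x, F n x ∈ s) :
    ∃ (V : X → E) (φ : ℕ → ℕ), StrictMono φ ∧
      ∀ x, Tendsto (fun n => F (φ n) x) atTop (𝓝 (V x)) := by
  let S : Set C(X, E) := {f | LipschitzWith K f ∧ ∀ x, f x ∈ s}
  have himage : ContinuousMap.toFun '' S =
      {f : X → E | LipschitzWith K f} ∩ univ.pi fun _ => s := by
    ext f
    constructor
    · rintro ⟨f, hf, rfl⟩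
      exact ⟨hf.1, fun x _ => hf.2 x⟩
    · exact fun hf => ⟨⟨f, hf.1.continuous⟩, ⟨hf.1, fun x => hf.2 x trivial⟩, rfl⟩
  have hS : IsCompact S := by
    refine ArzelaAscoli.isCompact_of_equicontinuous S ?_
      (LipschitzWith.uniformEquicontinuous _ K fun f => f.2.1).equicontinuous
    rw [himage]
    exact (isCompact_univ_pi fun _ => hs).inter_left (isClosed_setOfPred_lipschitzWith K)
  obtain ⟨V, -, φ, hφ, hlim⟩ := hS.tendsto_subseq
    (x := fun n => (⟨F n, (hF n).continuous⟩ : C(X, E))) fun n => ⟨hF n, hFs n⟩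
  exact ⟨V, φ, hφ, fun x => ((continuous_eval_const x).tendsto V).comp hlim⟩

section Existence

variable {μ : Measure ℝ} [IsProbabilityMeasure μ] {g : ℝ → ℝ} {L : ℝ≥0} {c : ℝ} {S W φ : ℝ → ℝ}

theorem exists_waveMap_eq_half (hg : IsMonostable g L) (hc : 0 < c) (hW : IsProfile W)
    (h₁ : Tendsto W atBot (𝓝 1)) (h₀ : Tendsto W atTop (𝓝 0)) :
    ∃ a, waveMap μ g L c W a = 1 / 2 := by
  have hbot := hg.tendsto_waveMap_const (μ := μ) hc
    (fun s => tendsto_atBot_add_const_right _ s tendsto_id) hW (by simp) h₁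
  have htop := hg.tendsto_waveMap_const (μ := μ) hc
    (fun s => tendsto_atTop_add_const_right _ s tendsto_id) hW (by simp) h₀
  simp only [hg.map_zero, hg.map_one, zero_div, add_zero] at hbot htop
  refine mem_range_of_exists_le_of_exists_ge (hg.lipschitzWith_waveMap hc hW).continuous ?_ ?_
  · exact (htop.eventually_le_const (by norm_num)).exists
  · exact (hbot.eventually_const_le (by norm_num)).exists

theorem exists_waveMap_eq_of_approx (hg : IsMonostable g L) (hc : 0 < c) {a : ℝ}
    (h : ∀ ε > 0, ∃ W, IsProfile W ∧ waveMap μ g L c W 0 = a ∧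
      ∀ x, |waveMap μ g L c W x - W x| ≤ ε) :
    ∃ V, IsProfile V ∧ waveMap μ g L c V = V ∧ V 0 = a := by
  choose F hF hFa happrox using fun n : ℕ => h (1 / (n + 1)) Nat.one_div_pos_of_nat
  obtain ⟨V, k, hk, hlim⟩ := exists_subseq_tendsto_of_lipschitzWith isCompact_Icc
    (fun n => hg.lipschitzWith_waveMap (μ := μ) hc (hF n))
    (fun n => (hg.isProfile_waveMap hc (hF n)).mem_Icc)
  have herr : ∀ x, Tendsto (fun n => waveMap μ g L c (F (k n)) x - F (k n) x) atTop (𝓝 0) :=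
    fun x => squeeze_zero_norm (fun n => happrox (k n) x)
      (tendsto_one_div_add_atTop_nhds_zero_nat.comp hk.tendsto_atTop)
  have hFlim : ∀ x, Tendsto (fun n => F (k n) x) atTop (𝓝 (V x)) := fun x => by
    simpa only [sub_sub_cancel, sub_zero] using (hlim x).sub (herr x)
  have hV : IsProfile V := .of_tendsto (fun n => hF (k n)) hFlim
  refine ⟨V, hV, funext fun x => ?_, ?_⟩
  · exact tendsto_nhds_unique (hg.tendsto_waveMap hc (u := fun _ => x) (fun n => hF (k n)) hV
      fun s => hFlim (x + s)) (hlim x)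
  · exact tendsto_nhds_unique (hlim 0) (by simp only [hFa, tendsto_const_nhds])

theorem exists_front_of_approx {J : ℝ → ℝ} (hJ : IsKernel J) (hg : IsMonostable g L) (hc : 0 < c)
    (h : ∀ ε > 0, ∃ W, IsProfile W ∧ Tendsto W atBot (𝓝 1) ∧ Tendsto W atTop (𝓝 0) ∧
      ∀ x, |waveMap (kernelMeasure J) g L c W x - W x| ≤ ε) :
    ∃ W, IsNLFront J g c W := by
  have := hJ.isProbabilityMeasure
  obtain ⟨V, hV, hfix, hV₀⟩ := exists_waveMap_eq_of_approx (μ := kernelMeasure J) (a := 1 / 2) hg hc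
    fun ε hε => by
      obtain ⟨W, hW, h₁, h₀, happrox⟩ := h ε hε
      obtain ⟨a, ha⟩ := exists_waveMap_eq_half (μ := kernelMeasure J) hg hc hW h₁ h₀
      refine ⟨fun x => W (x + a), hW.comp_add_right a, ?_, fun x => ?_⟩
      · rw [waveMap_comp_add_right, zero_add, ha]
      · rw [waveMap_comp_add_right]
        exact happrox (x + a)
  exact ⟨V, isNLFront_of_waveMap_eq hJ hg hc hV hfix (x := 0) (by rw [hV₀]; norm_num)⟩

-- Knaster–Tarski: the fixed point is the infimum of all profiles `W` with `Φ W ≤ W`.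
theorem exists_isProfile_eq_of_map_le {Φ : (ℝ → ℝ) → ℝ → ℝ}
    (hΦ : ∀ ⦃W⦄, IsProfile W → IsProfile (Φ W))
    (hmono : ∀ ⦃U V⦄, IsProfile U → IsProfile V → U ≤ V → Φ U ≤ Φ V)
    (hS : IsProfile S) (hΦS : Φ S ≤ S) : ∃ W, IsProfile W ∧ W ≤ S ∧ Φ W = W := by
  let T := {W : ℝ → ℝ // IsProfile W ∧ Φ W ≤ W}
  have : Nonempty T := ⟨S, hS, hΦS⟩
  let V : ℝ → ℝ := fun x => ⨅ W : T, W.1 x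
  have hbdd : ∀ x, BddBelow (range fun W : T => W.1 x) := fun x =>
    ⟨0, forall_mem_range.2 fun W => (W.2.1.mem_Icc x).1⟩
  have hV_le : ∀ W : T, V ≤ W.1 := fun W x => ciInf_le (hbdd x) W
  have hV : IsProfile V :=
    ⟨fun x y hxy => ciInf_mono (hbdd y) fun W => W.2.1.antitone hxy,
      fun x => ⟨le_ciInf fun W => (W.2.1.mem_Icc x).1,
        (hV_le ⟨S, hS, hΦS⟩ x).trans (hS.mem_Icc x).2⟩⟩
  have hΦV : Φ V ≤ V := fun x => le_ciInf fun W => (hmono hV W.2.1 (hV_le W) x).trans (W.2.2 x)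
  exact ⟨V, hV, hV_le ⟨S, hS, hΦS⟩,
    hΦV.antisymm (hV_le ⟨Φ V, hΦ hV, hmono (hΦ hV) hV hΦV⟩)⟩

theorem exists_approx_of_waveMap_le (hg : IsMonostable g L) (hc : 0 < c) (hS : IsProfile S)
    (hle : waveMap μ g L c S ≤ S) {x : ℝ} (hx : S x ∈ Ioo (0 : ℝ) 1) {ε : ℝ} (hε : 0 < ε) :
    ∃ W, IsProfile W ∧ Tendsto W atBot (𝓝 1) ∧ Tendsto W atTop (𝓝 0) ∧
      ∀ y, |waveMap μ g L c W y - W y| ≤ ε := by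
  set φ := (Iic x).indicator fun _ => min ε (S x)
  have hφ_pos : 0 < min ε (S x) := lt_min hε hx.1
  have hφ : IsProfile φ := .indicator_Iic ⟨hφ_pos.le, (min_le_right _ _).trans hx.2.le⟩ x
  have hφS : φ ≤ S := indicator_le' (fun y hy => (min_le_right _ _).trans (hS.antitone hy))
    fun y _ => (hS.mem_Icc y).1
  have hφε : ∀ y, φ y ≤ ε := indicator_le' (fun _ _ => min_le_left _ _) fun _ _ => hε.le
  obtain ⟨W, hW, hWS, hfix⟩ := exists_isProfile_eq_of_map_le (Φ := fun W => φ ⊔ waveMap μ g L c W)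
    (fun W hW => hφ.sup (hg.isProfile_waveMap hc hW))
    (fun U V hU hV h => sup_le_sup_left (hg.waveMap_mono hc hU hV h) φ) hS (sup_le hφS hle)
  have hφW : φ ≤ W := le_sup_left.trans hfix.le
  have hTW : waveMap μ g L c W ≤ W := le_sup_right.trans hfix.le
  have hWx : 0 < W x := hφ_pos.trans_le (by simpa [φ] using hφW x)
  refine ⟨W, hW, hg.tendsto_atBot_one hc hW hTW hWx,
    hg.tendsto_atTop_zero hc hW hTW ((hWS x).trans_lt hx.2), fun y => ?_⟩
  have hTW₀ : 0 ≤ waveMap μ g L c W y := ((hg.isProfile_waveMap hc hW).mem_Icc y).1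
  have hup : W y ≤ ε + waveMap μ g L c W y :=
    (congrFun hfix y).ge.trans (sup_le (by linarith [hφε y]) (by linarith))
  exact abs_le.2 ⟨by linarith, by linarith [hTW y]⟩

theorem exists_front_of_le {J g' : ℝ → ℝ} (hJ : IsKernel J) (hg : IsMonostable g L) (hc : 0 < c)
    (hle : ∀ w ∈ Icc (0 : ℝ) 1, g w ≤ g' w) (h : ∃ W, IsNLFront J g' c W) :
    ∃ W, IsNLFront J g c W := by
  have := hJ.isProbabilityMeasure
  obtain ⟨S, hS⟩ := h
  have hTS : waveMap (kernelMeasure J) g L c S ≤ S := fun x => by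
    simpa only [zero_div, add_zero] using
      hS.waveMap_le_add hJ hg hc (δ := 0) (by simpa only [add_zero] using hle) x
  exact exists_front_of_approx hJ hg hc fun ε hε =>
    exists_approx_of_waveMap_le hg hc hS.isProfile hTS (hS.mem_Ioo 0) hε

theorem exists_front_of_tendstoUniformlyOn {J : ℝ → ℝ} {ι : Type*} {l : Filter ι} [l.NeBot]
    {G : ι → ℝ → ℝ} (hJ : IsKernel J) (hg : IsMonostable g L) (hc : 0 < c)
    (hG : TendstoUniformlyOn G g l (Icc 0 1)) (h : ∀ᶠ i in l, ∃ W, IsNLFront J (G i) c W) :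
    ∃ W, IsNLFront J g c W := by
  refine exists_front_of_approx hJ hg hc fun ε hε => ?_
  have hL : (0 : ℝ) < L + 1 := by positivity
  obtain ⟨i, hclose, W, hW⟩ :=
    ((Metric.tendstoUniformlyOn_iff.1 hG (ε * (L + 1)) (by positivity)).and h).exists
  have habs : ∀ w ∈ Icc (0 : ℝ) 1, |g w - G i w| ≤ ε * (L + 1) := fun w hw => (hclose w hw).le
  refine ⟨W, hW.isProfile, hW.tendsto_atBot, hW.tendsto_atTop, fun x => abs_sub_le_iff.2 ⟨?_, ?_⟩⟩
  · have := hW.waveMap_le_add hJ hg hc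
      (fun w hw => sub_le_iff_le_add'.1 (abs_sub_le_iff.1 (habs w hw)).1) x
    rw [mul_div_cancel_right₀ _ hL.ne'] at this
    linarith
  · have := hW.le_waveMap_add hJ hg hc
      (fun w hw => sub_le_iff_le_add'.1 (abs_sub_le_iff.1 (habs w hw)).2) x
    rw [mul_div_cancel_right₀ _ hL.ne'] at this
    linarith

end Existence

/-! ### The threshold -/

theorem exists_threshold_of_downward_closed_of_left_closed {α : Type*}
    [ConditionallyCompleteLinearOrder α] {P : α → Prop} {a q₁ q₂ : α}
    (ha : a ≤ q₁) (hq : q₁ < q₂) (h₁ : P q₁) (h₂ : ¬P q₂)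
    (hdown : ∀ p q, a ≤ p → p ≤ q → P q → P p)
    (hleft : ∀ q, a < q → (∀ p, a ≤ p → p < q → P p) → P q) :
    ∃ t, q₁ ≤ t ∧ t < q₂ ∧ (∀ q, a ≤ q → q ≤ t → P q) ∧ ∀ q, t < q → ¬P q := by
  set A := {q | q₁ ≤ q ∧ P q}
  have hq₁A : q₁ ∈ A := ⟨le_rfl, h₁⟩
  have hub : q₂ ∈ upperBounds A := fun q hqA => by
    by_contra! hlt
    exact h₂ (hdown q₂ q (ha.trans hq.le) hlt.le hqA.2)
  have hle : q₁ ≤ sSup A := le_csSup ⟨q₂, hub⟩ hq₁A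
  have hbelow : ∀ p, a ≤ p → p < sSup A → P p := fun p hp hlt =>
    have ⟨q, hqA, hpq⟩ := exists_lt_of_lt_csSup ⟨q₁, hq₁A⟩ hlt
    hdown p q hp hpq.le hqA.2
  have hsup : P (sSup A) := by
    rcases hle.eq_or_lt with heq | hlt
    · rwa [← heq]
    · exact hleft _ (ha.trans_lt hlt) hbelow
  refine ⟨sSup A, hle, (csSup_le ⟨q₁, hq₁A⟩ hub).lt_of_ne fun h => h₂ (h ▸ hsup),
    fun q haq hqt => hdown q _ haq hqt hsup, fun q hqt hP => ?_⟩
  exact hqt.not_ge (le_csSup ⟨q₂, hub⟩ ⟨hle.trans hqt.le, hP⟩)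

theorem exists_isMonostable_of_contDiffOn {g : ℝ → ℝ} {n : WithTop ℕ∞} (hn : n ≠ 0)
    (hg : ContDiffOn ℝ n g (Icc 0 1)) (h₀ : g 0 = 0) (h₁ : g 1 = 0)
    (hpos : ∀ w ∈ Ioo (0 : ℝ) 1, 0 < g w) : ∃ L, IsMonostable g L :=
  have ⟨L, hL⟩ := hg.exists_lipschitzOnWith hn (convex_Icc 0 1) isCompact_Icc
  ⟨L, hL, h₀, h₁, hpos⟩

theorem tendstoUniformlyOn_of_abs_sub_le {α : Type*} {f : α → ℝ → ℝ} {s : Set α} {t : Set ℝ}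
    {C q : ℝ} (h : ∀ w ∈ s, ∀ p ∈ t, |f w q - f w p| ≤ C * |q - p|) :
    TendstoUniformlyOn (fun p w => f w p) (fun w => f w q) (𝓝[t] q) s := by
  have hlim : Tendsto (fun p => C * |q - p|) (𝓝[t] q) (𝓝 0) := by
    have hcont : Continuous fun p => C * |q - p| := by fun_prop
    simpa only [sub_self, abs_zero, mul_zero] using
      (hcont.continuousWithinAt (s := t) (x := q)).tendsto
  refine Metric.tendstoUniformlyOn_iff.2 fun ε hε => ?_
  filter_upwards [hlim.eventually_lt_const hε, self_mem_nhdsWithin] with p hp hpt w hw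
  exact (h w hw p hpt).trans_lt hp

theorem monotoneOn_of_forall_mem_Ioo {α : Type*} [Preorder α] {f : ℝ → α → ℝ} {s : Set α}
    (h₀ : ∀ q ∈ s, f 0 q = 0) (h₁ : ∀ q ∈ s, f 1 q = 0)
    (h : ∀ w ∈ Ioo (0 : ℝ) 1, MonotoneOn (f w) s) :
    ∀ w ∈ Icc (0 : ℝ) 1, MonotoneOn (f w) s := by
  intro w hw
  rcases hw.1.eq_or_lt with rfl | hw₀
  · exact fun p hp q hq _ => ((h₀ p hp).trans (h₀ q hq).symm).le
  rcases hw.2.eq_or_lt with rfl | hw₁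
  · exact fun p hp q hq _ => ((h₁ p hp).trans (h₁ q hq).symm).le
  · exact h w ⟨hw₀, hw₁⟩

theorem threshold_exists_nonlocal_general {J : ℝ → ℝ} (hJ : IsKernel J) {f : ℝ → ℝ → ℝ}
    {cNL : ℝ → ℝ} {c₀ q₁ q₂ : ℝ} (hc₀ : 0 ≤ c₀)
    (hf : ∀ q, 0 ≤ q → ∃ L, IsMonostable (fun w => f w q) L)
    (hcont : ∀ q, 0 < q → TendstoUniformlyOn (fun p w => f w p) (fun w => f w q) (𝓝[<] q) (Icc 0 1))
    (hmono : ∀ w ∈ Icc (0 : ℝ) 1, MonotoneOn (f w) (Ici 0))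
    (hmin : ∀ q, 0 ≤ q → c₀ ≤ cNL q ∧
      ∀ c, (∃ W, IsNLFront J (fun w => f w q) c W) ↔ cNL q ≤ c)
    (hq₁ : 0 ≤ q₁) (hc₁ : cNL q₁ = c₀) (hq₂ : q₁ < q₂) (hc₂ : c₀ < cNL q₂) :
    ∃ qstar, q₁ ≤ qstar ∧ qstar < q₂ ∧ (∀ q, 0 ≤ q → q ≤ qstar → cNL q = c₀) ∧
      ∀ q, qstar < q → c₀ < cNL q := by
  let P : ℝ → Prop := fun q => ∀ c, c₀ < c → ∃ W, IsNLFront J (fun w => f w q) c W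
  have hP : ∀ q, 0 ≤ q → (P q ↔ cNL q ≤ c₀) := fun q hq => by
    simp only [P, (hmin q hq).2]
    exact ⟨le_of_forall_gt_imp_ge_of_dense, fun h c hc => h.trans hc.le⟩
  have hdown : ∀ p q, 0 ≤ p → p ≤ q → P q → P p := fun p q hp hpq h c hc => by
    obtain ⟨L, hL⟩ := hf p hp
    exact exists_front_of_le hJ hL (hc₀.trans_lt hc)
      (fun w hw => hmono w hw hp (hp.trans hpq) hpq) (h c hc)
  have hleft : ∀ q, 0 < q → (∀ p, 0 ≤ p → p < q → P p) → P q := fun q hq h c hc => by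
    obtain ⟨L, hL⟩ := hf q hq.le
    refine exists_front_of_tendstoUniformlyOn hJ hL (hc₀.trans_lt hc) (hcont q hq) ?_
    filter_upwards [Ioo_mem_nhdsLT hq] with p hp using h p hp.1.le hp.2 c hc
  obtain ⟨t, ht₁, ht₂, hbelow, habove⟩ := exists_threshold_of_downward_closed_of_left_closed hq₁ hq₂
    ((hP q₁ hq₁).2 hc₁.le) (mt (hP q₂ (hq₁.trans hq₂.le)).1 hc₂.not_ge) hdown hleft
  refine ⟨t, ht₁, ht₂, fun q hq hqt => ?_, fun q htq => ?_⟩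
  · exact ((hP q hq).1 (hbelow q hq hqt)).antisymm (hmin q hq).1
  · exact not_le.1 (mt (hP q (hq₁.trans (ht₁.trans htq.le))).2 (habove q htq))

/-- Under (A1)-(A3) and (A6)-(A7) there is a threshold `q* ∈ [q₁, q₂)` such that the minimal
nonlocal speed equals `c₀*` on `[0, q*]` and is `> c₀*` on `(q*, ∞)`. -/
theorem threshold_exists_nonlocal
    (J : ℝ → ℝ) (hJ : IsKernel J)
    (f : ℝ → ℝ → ℝ) (γ₀ : ℝ) (hγ₀ : 0 < γ₀)
    (cNL : ℝ → ℝ) (q₁ q₂ : ℝ)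
    -- (A1) monostable condition, with ∂_w f(0;q) = γ₀ for all q
    (hA1 : ∀ q, 0 ≤ q →
      ContDiffOn ℝ 2 (fun w => f w q) (Icc 0 1) ∧
      f 0 q = 0 ∧ f 1 q = 0 ∧
      derivWithin (fun w => f w q) (Icc 0 1) 0 = γ₀ ∧
      derivWithin (fun w => f w q) (Icc 0 1) 1 < 0 ∧
      (∀ w ∈ Ioo (0:ℝ) 1, 0 < f w q))
    -- (A2) Lipschitz continuity in the parameter, for f, f', f''
    (hA2 : ∃ L₀ > (0:ℝ), ∀ n : ℕ, n ≤ 2 → ∀ w ∈ Icc (0:ℝ) 1, ∀ qa qb : ℝ, 0 ≤ qa → 0 ≤ qb →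
      |iteratedDerivWithin n (fun w => f w qa) (Icc 0 1) w -
        iteratedDerivWithin n (fun w => f w qb) (Icc 0 1) w| ≤ L₀ * |qa - qb|)
    -- (A3) monotonicity condition
    (hA3 : ∀ q qh : ℝ, 0 ≤ q → q < qh →
      (∀ w ∈ Ioo (0:ℝ) 1, f w q < f w qh) ∧
      iteratedDerivWithin 2 (fun w => f w q) (Icc 0 1) 0 <
        iteratedDerivWithin 2 (fun w => f w qh) (Icc 0 1) 0)
    -- minimal-speed characterization: fronts exist exactly for speeds c ≥ c_NL*(q) ≥ c₀*
    (hmin : ∀ q, 0 ≤ q → c0star J γ₀ ≤ cNL q ∧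
      ∀ c, (∃ W : ℝ → ℝ, IsNLFront J (fun w => f w q) c W) ↔ cNL q ≤ c)
    -- (A6) KPP condition at q₁, hence linear selection there
    (hq₁ : 0 < q₁) (hA6 : ∀ w ∈ Icc (0:ℝ) 1, f w q₁ ≤ γ₀ * w)
    (hc₁ : cNL q₁ = c0star J γ₀)
    -- (A7) nonlinear selection at some q₂ > q₁
    (hq₂ : q₁ < q₂) (hc₂ : c0star J γ₀ < cNL q₂) :
    ∃ qstar : ℝ, q₁ ≤ qstar ∧ qstar < q₂ ∧
      (∀ q, 0 ≤ q → q ≤ qstar → cNL q = c0star J γ₀) ∧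
      (∀ q, qstar < q → c0star J γ₀ < cNL q) := by
  obtain ⟨L₀, -, hL₀⟩ := hA2
  refine threshold_exists_nonlocal_general hJ (hJ.c0star_nonneg hγ₀.le) (fun q hq => ?_)
    (fun q hq => ?_) ?_ hmin hq₁.le hc₁ hq₂ hc₂
  · obtain ⟨hsmooth, h₀, h₁, -, -, hpos⟩ := hA1 q hq
    exact exists_isMonostable_of_contDiffOn two_ne_zero hsmooth h₀ h₁ hpos
  · rw [← nhdsWithin_Ico_eq_nhdsLT hq]
    refine tendstoUniformlyOn_of_abs_sub_le (C := L₀) fun w hw p hp => ?_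
    simpa only [iteratedDerivWithin_zero] using hL₀ 0 (Nat.zero_le 2) w hw q p hq.le hp.1
  · exact monotoneOn_of_forall_mem_Ioo (fun q hq => (hA1 q hq).2.1) (fun q hq => (hA1 q hq).2.2.1)
      fun w hw => StrictMonoOn.monotoneOn fun p hp q _ hpq => (hA3 p q hp hpq).1 w hw
end
end

section
/- Let c > 0 and β < 0, and define I₁(μ) := ∫_ℝ J(y)e^{μy}dy + β − 1 for μ ≥ 0. Then the equation cμ = I₁(μ) admits exactly one positive root μ > 0. -/
open Filter Asymptotics MeasureTheory Set

noncomputable section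

/-!
The integral `∫ J(y) e^{μy} dy` is the moment generating function `M` of the probability measure
with density `J`. It is convex, and it grows exponentially because `J` has mass on the positive
half-line. Hence `μ ↦ M μ - c μ` is convex, lies below the level `1 - β` at `μ = 0`, and eventually
lies above it. A convex function crosses a level from below exactly once.
-/

open ProbabilityTheory

section Convex

variable {f : ℝ → ℝ} {a b v : ℝ}

lemma exists_mem_Ioc_le_of_convexOn (hf : ConvexOn ℝ (Ici a) f) (hab : a < b) (ha : f a < v)
    (hb : v ≤ f b) : ∃ x ∈ Ioc a b, f x ≤ v := by
  -- The point where the chord from `(a, f a)` to `(b, f b)` reaches height `v`; this choice avoids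
  -- any continuity assumption at the endpoint `a`.
  set s := (v - f a) / (f b - f a) with hs
  have hfab : 0 < f b - f a := by linarith
  have hs_pos : 0 < s := div_pos (by linarith) hfab
  have hs_le : s ≤ 1 := (div_le_one hfab).2 (by linarith)
  refine ⟨(1 - s) * a + s * b, ⟨by nlinarith, by nlinarith⟩, ?_⟩
  calc f ((1 - s) * a + s * b)
      ≤ (1 - s) * f a + s * f b :=
        hf.2 self_mem_Ici hab.le (by linarith) hs_pos.le (by ring)
    _ = f a + s * (f b - f a) := by ring
    _ = v := by rw [hs, div_mul_cancel₀ _ hfab.ne']; ring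

lemma lt_of_convexOn_of_lt {x y : ℝ} (hf : ConvexOn ℝ (Ici a) f) (hax : a < x) (hxy : x < y)
    (h : f a < f x) : f x < f y :=
  hf.lt_right_of_left_lt self_mem_Ici (hax.trans hxy).le
    (openSegment_eq_Ioo (hax.trans hxy) ▸ ⟨hax, hxy⟩) h

theorem existsUnique_gt_eq_of_convexOn (hf : ConvexOn ℝ (Ici a) f) (hab : a < b) (ha : f a < v)
    (hb : v ≤ f b) : ∃! x, a < x ∧ f x = v := by
  obtain ⟨x₀, ⟨hax₀, hx₀b⟩, hx₀⟩ := exists_mem_Ioc_le_of_convexOn hf hab ha hb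
  have hcont : ContinuousOn f (Icc x₀ b) :=
    hf.continuousOn_interior.mono fun x hx => by
      rw [interior_Ici]
      exact hax₀.trans_le hx.1
  obtain ⟨x, hx, hfx⟩ := intermediate_value_Icc hx₀b hcont ⟨hx₀, hb⟩
  have hax : a < x := hax₀.trans_le hx.1
  refine ⟨x, ⟨hax, hfx⟩, fun y ⟨hay, hfy⟩ => ?_⟩
  rcases lt_trichotomy y x with hyx | rfl | hxy
  · exact absurd (lt_of_convexOn_of_lt hf hay hyx (hfy ▸ ha)) (by simp [hfx, hfy])
  · rfl
  · exact absurd (lt_of_convexOn_of_lt hf hax hxy (hfx ▸ ha)) (by simp [hfx, hfy])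

end Convex

section MomentGeneratingFunction

variable {Ω : Type*} [MeasurableSpace Ω] {μ : Measure Ω} {X : Ω → ℝ}

theorem convexOn_mgf : ConvexOn ℝ (integrableExpSet X μ) (mgf X μ) := by
  refine ⟨convex_integrableExpSet, fun s hs t ht p q hp hq hpq => ?_⟩
  have hsum := (hs.const_mul p).add (ht.const_mul q)
  calc mgf X μ (p • s + q • t)
      ≤ ∫ ω, (p * Real.exp (s * X ω) + q * Real.exp (t * X ω)) ∂μ := by
        refine integral_mono (convex_integrableExpSet hs ht hp hq hpq) hsum fun ω => ?_
        have h := convexOn_exp.2 (mem_univ (s * X ω)) (mem_univ (t * X ω)) hp hq hpq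
        simpa only [smul_eq_mul, add_mul, mul_assoc] using h
    _ = p • mgf X μ s + q • mgf X μ t := by
        rw [integral_add (hs.const_mul p) (ht.const_mul q), integral_const_mul,
          integral_const_mul]
        rfl

lemma exists_pos_measure_le_ne_zero (hX : μ {ω | 0 < X ω} ≠ 0) :
    ∃ ε > 0, μ {ω | ε ≤ X ω} ≠ 0 := by
  have hcover : {ω | 0 < X ω} ⊆ ⋃ n : ℕ, {ω | 1 / ((n : ℝ) + 1) ≤ X ω} := fun ω hω => by
    obtain ⟨n, hn⟩ := exists_nat_one_div_lt (show 0 < X ω from hω)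
    exact mem_iUnion.2 ⟨n, hn.le⟩
  obtain ⟨n, hn⟩ := exists_measure_pos_of_not_measure_iUnion_null
    fun h => hX (measure_mono_null hcover h)
  exact ⟨1 / ((n : ℝ) + 1), by positivity, hn.ne'⟩

variable [IsFiniteMeasure μ]

theorem isLittleO_id_mgf_atTop (hX : μ {ω | 0 < X ω} ≠ 0)
    (hexp : ∀ᶠ t in atTop, t ∈ integrableExpSet X μ) : (fun t : ℝ => t) =o[atTop] mgf X μ := by
  obtain ⟨ε, hε, hεX⟩ := exists_pos_measure_le_ne_zero hX
  set p := μ.real {ω | ε ≤ X ω}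
  have hp : 0 < p := ENNReal.toReal_pos hεX (measure_ne_top _ _)
  have hchernoff : (fun t => Real.exp (ε * t)) =O[atTop] mgf X μ := by
    refine .of_bound p⁻¹ ?_
    filter_upwards [eventually_ge_atTop 0, hexp] with t ht hexp_t
    have h := measure_ge_le_exp_mul_mgf ε ht hexp_t
    rw [Real.norm_of_nonneg (Real.exp_nonneg _), Real.norm_of_nonneg mgf_nonneg,
      le_inv_mul_iff₀ hp, ← le_div_iff₀ (Real.exp_pos _), div_eq_inv_mul, ← Real.exp_neg]
    simpa only [neg_mul, mul_comm t ε] using h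
  simpa only [pow_one] using (isLittleO_pow_exp_pos_mul_atTop 1 hε).trans_isBigO hchernoff

lemma exists_pos_affine_le_mgf (hX : μ {ω | 0 < X ω} ≠ 0)
    (hexp : ∀ᶠ t in atTop, t ∈ integrableExpSet X μ) (c d : ℝ) :
    ∃ t > 0, c * t + d ≤ mgf X μ t := by
  have hlin : (fun t : ℝ => c * t + d) =o[atTop] mgf X μ :=
    ((isLittleO_id_mgf_atTop hX hexp).const_mul_left c).add
      ((isLittleO_const_id_atTop d).trans (isLittleO_id_mgf_atTop hX hexp))
  obtain ⟨t, ht, hle⟩ := ((eventually_gt_atTop 0).and (hlin.bound one_pos)).exists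
  rw [one_mul, Real.norm_of_nonneg mgf_nonneg] at hle
  exact ⟨t, ht, (Real.le_norm_self _).trans hle⟩

theorem unique_positive_root_general (hX : μ {ω | 0 < X ω} ≠ 0)
    (hexp : Ioi 0 ⊆ integrableExpSet X μ) (c b : ℝ) (hb : μ.real univ + b < 0) :
    ∃! t : ℝ, 0 < t ∧ c * t = mgf X μ t + b := by
  have hexp₀ : Ici 0 ⊆ integrableExpSet X μ := by
    rw [← Ioi_insert]
    exact insert_subset (by simp [integrableExpSet]) hexp
  have hconv : ConvexOn ℝ (Ici 0) fun t => mgf X μ t - c * t :=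
    (convexOn_mgf.subset hexp₀ (convex_Ici 0)).sub
      ((LinearMap.mul ℝ ℝ c).concaveOn (convex_Ici 0))
  obtain ⟨T, hT, hle⟩ :=
    exists_pos_affine_le_mgf hX ((eventually_gt_atTop 0).mono hexp) c (-b)
  have hzero : mgf X μ 0 - c * 0 < -b := by
    rw [mgf_zero']
    linarith
  have hroot := existsUnique_gt_eq_of_convexOn hconv hT hzero (by linarith)
  refine (existsUnique_congr fun t => and_congr_right fun _ => ?_).1 hroot
  constructor <;> intro h <;> linarith

end MomentGeneratingFunction

section Density

variable {Ω : Type*} [MeasurableSpace Ω] {μ : Measure Ω} {f : Ω → ℝ} {X : Ω → ℝ}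

lemma withDensity_ofReal_apply (hf : Integrable f μ) (hf₀ : 0 ≤ᵐ[μ] f) {s : Set Ω}
    (hs : MeasurableSet s) :
    μ.withDensity (fun ω => ENNReal.ofReal (f ω)) s = ENNReal.ofReal (∫ ω in s, f ω ∂μ) := by
  rw [withDensity_apply _ hs,
    ofReal_integral_eq_lintegral_ofReal hf.integrableOn (ae_restrict_of_ae hf₀)]

lemma mgf_withDensity_ofReal (hf : AEMeasurable f μ) (hf₀ : 0 ≤ᵐ[μ] f) (t : ℝ) :
    mgf X (μ.withDensity fun ω => ENNReal.ofReal (f ω)) t =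
      ∫ ω, f ω * Real.exp (t * X ω) ∂μ := by
  rw [mgf, integral_withDensity_eq_integral_toReal_smul₀ hf.ennreal_ofReal (by simp)]
  refine integral_congr_ae (hf₀.mono fun ω hω => ?_)
  simp only [ENNReal.toReal_ofReal hω, smul_eq_mul]

lemma mem_integrableExpSet_withDensity_ofReal (hf : AEMeasurable f μ) (hf₀ : 0 ≤ᵐ[μ] f) {t : ℝ} :
    t ∈ integrableExpSet X (μ.withDensity fun ω => ENNReal.ofReal (f ω)) ↔
      Integrable (fun ω => f ω * Real.exp (t * X ω)) μ := by
  rw [integrableExpSet, mem_ofPred_eq,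
    integrable_withDensity_iff_integrable_smul₀' hf.ennreal_ofReal (by simp)]
  refine integrable_congr (hf₀.mono fun ω hω => ?_)
  simp only [ENNReal.toReal_ofReal hω, smul_eq_mul]

end Density

lemma integral_eq_two_mul_integral_Ioi_of_even {f : ℝ → ℝ} (hf : Function.Even f) :
    ∫ x, f x = 2 * ∫ x in Ioi 0, f x := by
  rw [← integral_comp_abs]
  refine integral_congr_ae (.of_forall fun x => ?_)
  rcases abs_choice x with h | h <;> simp only [h, hf x]

/-- The law of a displacement with density `J`, through which `∫ J(y) e^{μy} dy` becomes a moment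
generating function. Negative values of `J` are truncated to `0`. -/
def dispersalMeasure (J : ℝ → ℝ) : Measure ℝ :=
  volume.withDensity fun y => ENNReal.ofReal (J y)

namespace IsKernel

variable {J : ℝ → ℝ}

lemma integrable_mul_s13 (hJ : IsKernel J) {g : ℝ → ℝ} (hg : Continuous g) :
    Integrable fun y => J y * g y :=
  (hJ.1.mul hg).integrable_of_hasCompactSupport hJ.2.2.2.1.mul_right

lemma dispersalMeasure_apply (hJ : IsKernel J) {s : Set ℝ} (hs : MeasurableSet s) :
    dispersalMeasure J s = ENNReal.ofReal (∫ y in s, J y) :=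
  withDensity_ofReal_apply (hJ.1.integrable_of_hasCompactSupport hJ.2.2.2.1)
    (.of_forall hJ.2.1) hs

lemma isProbabilityMeasure_dispersalMeasure (hJ : IsKernel J) :
    IsProbabilityMeasure (dispersalMeasure J) where
  measure_univ := by
    rw [hJ.dispersalMeasure_apply .univ, setIntegral_univ, hJ.2.2.2.2, ENNReal.ofReal_one]

lemma dispersalMeasure_Ioi_ne_zero (hJ : IsKernel J) : dispersalMeasure J (Ioi 0) ≠ 0 := by
  have hhalf := integral_eq_two_mul_integral_Ioi_of_even hJ.2.2.1
  rw [hJ.2.2.2.2] at hhalf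
  rw [hJ.dispersalMeasure_apply measurableSet_Ioi, ENNReal.ofReal_ne_zero_iff]
  linarith

lemma mgf_dispersalMeasure (hJ : IsKernel J) (t : ℝ) :
    mgf id (dispersalMeasure J) t = ∫ y, J y * Real.exp (t * y) :=
  mgf_withDensity_ofReal hJ.1.aemeasurable (.of_forall hJ.2.1) t

lemma integrableExpSet_dispersalMeasure (hJ : IsKernel J) :
    integrableExpSet id (dispersalMeasure J) = univ :=
  eq_univ_of_forall fun t =>
    (mem_integrableExpSet_withDensity_ofReal hJ.1.aemeasurable (.of_forall hJ.2.1)).2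
      (hJ.integrable_mul_s13 (g := fun y => Real.exp (t * y)) (by fun_prop))

end IsKernel

/-- For `c > 0` and `β < 0`, the equation `cμ = ∫ J(y) e^{μy} dy + β - 1`
admits exactly one positive root. -/
theorem unique_positive_root
    (J : ℝ → ℝ) (hJ : IsKernel J) (hJne : ∃ x, J x ≠ 0)
    (c β : ℝ) (hc : 0 < c) (hβ : β < 0) :
    ∃! μ : ℝ, 0 < μ ∧ c * μ = (∫ y, J y * Real.exp (μ * y)) + β - 1 := by
  have := hJ.isProbabilityMeasure_dispersalMeasure
  simpa only [hJ.mgf_dispersalMeasure, ← add_sub_assoc] using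
    unique_positive_root_general (X := id) hJ.dispersalMeasure_Ioi_ne_zero
      (hJ.integrableExpSet_dispersalMeasure ▸ subset_univ _) c (β - 1)
      (by rw [probReal_univ]; linarith)
end
end

section
/- Let a ∈ ℝ and let Ŵ : (a,∞) → (0,∞) be a positive C² function satisfying Ŵ''(ξ) + 2Ŵ'(ξ) + Ŵ(ξ) + 𝒥(ξ) = 0 for all ξ > a, where 𝒥 = 𝒥₁ + 𝒥₂ with 𝒥₁(ξ) = o(Ŵ(ξ)) as ξ → +∞, and there exist constants κ₁ ≥ κ₂ > 0 and ξ̄ > a such that κ₂ e^{−2ξ} ≤ 𝒥₂(ξ) ≤ κ₁ e^{−2ξ} for all ξ ≥ ξ̄. Then 𝒥₂(ξ) = o(Ŵ(ξ)) as ξ → +∞ (and consequently 𝒥(ξ) = o(Ŵ(ξ)) as ξ → +∞). -/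
/-!
Since eventually `𝒥₂ ≥ 0` and `𝒥₁ ≥ -δ Ŵ`, we have `Ŵ'' + 2 Ŵ' + (1 - δ) Ŵ ≤ 0`, and the left
side is `(D + α)(D + β) Ŵ` with `D = d/dξ`, `α = 1 - √δ`, `β = 1 + √δ`. Hence
`e^{αξ} (Ŵ' + β Ŵ)` is nonincreasing. If it ever became negative, `e^{βξ} Ŵ` would decrease at least
linearly and `Ŵ` would change sign; so `e^{βξ} Ŵ` is nondecreasing and `Ŵ` decays no faster than
`e^{-βξ}`. For small `δ` we have `β < 2`, whence `𝒥₂ = O(e^{-2ξ}) = o(Ŵ)`.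
-/

open Filter Asymptotics MeasureTheory Set

noncomputable section

section ExpWeight

variable {f f' : ℝ → ℝ}

lemma hasDerivAt_exp_mul_mul {d x : ℝ} (c : ℝ) (hf : HasDerivAt f d x) :
    HasDerivAt (fun y => Real.exp (c * y) * f y) (Real.exp (c * x) * (d + c * f x)) x :=
  (((hasDerivAt_id x).const_mul c).exp.mul hf).congr_deriv (by simp only [id_eq]; ring)

lemma antitoneOn_of_hasDerivAt_nonpos {D : Set ℝ} (hD : Convex ℝ D)
    (hf : ∀ x ∈ D, HasDerivAt f (f' x) x) (hf' : ∀ x ∈ D, f' x ≤ 0) : AntitoneOn f D :=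
  antitoneOn_of_hasDerivWithinAt_nonpos hD
    (fun x hx => (hf x hx).continuousAt.continuousWithinAt)
    (fun x hx => (hf x (interior_subset hx)).hasDerivWithinAt)
    (fun x hx => hf' x (interior_subset hx))

lemma antitoneOn_exp_mul_mul {c : ℝ} {D : Set ℝ} (hD : Convex ℝ D)
    (hf : ∀ x ∈ D, HasDerivAt f (f' x) x) (hf' : ∀ x ∈ D, f' x + c * f x ≤ 0) :
    AntitoneOn (fun x => Real.exp (c * x) * f x) D :=
  antitoneOn_of_hasDerivAt_nonpos hD (fun x hx => hasDerivAt_exp_mul_mul c (hf x hx))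
    fun x hx => mul_nonpos_of_nonneg_of_nonpos (Real.exp_nonneg _) (hf' x hx)

lemma monotoneOn_exp_mul_mul {c : ℝ} {D : Set ℝ} (hD : Convex ℝ D)
    (hf : ∀ x ∈ D, HasDerivAt f (f' x) x) (hf' : ∀ x ∈ D, 0 ≤ f' x + c * f x) :
    MonotoneOn (fun x => Real.exp (c * x) * f x) D := by
  have hneg : AntitoneOn (fun x => Real.exp (c * x) * -f x) D :=
    antitoneOn_exp_mul_mul hD (fun x hx => (hf x hx).neg) fun x hx => by linarith [hf' x hx]
  simpa only [mul_neg, neg_neg] using hneg.neg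

lemma tendsto_atBot_of_hasDerivAt_le_neg {c X : ℝ} (hc : c < 0)
    (hf : ∀ x ∈ Ici X, HasDerivAt f (f' x) x) (hf' : ∀ x ∈ Ici X, f' x ≤ c) :
    Tendsto f atTop atBot := by
  have hanti : AntitoneOn (fun x => f x - c * x) (Ici X) :=
    antitoneOn_of_hasDerivAt_nonpos (convex_Ici X)
      (fun x hx => (hf x hx).sub ((hasDerivAt_id x).const_mul c))
      fun x hx => by linarith [hf' x hx]
  have hline : Tendsto (fun x => c * x + (f X - c * X)) atTop atBot :=
    tendsto_atBot_add_const_right _ _ (tendsto_id.const_mul_atTop_of_neg hc)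
  refine tendsto_atBot_mono' _ ?_ hline
  filter_upwards [eventually_ge_atTop X] with x hx
  have hle : f x - c * x ≤ f X - c * X := hanti self_mem_Ici hx hx
  linarith

end ExpWeight

section Supersolution

variable {f f' f'' : ℝ → ℝ} {α β X : ℝ}

lemma deriv_add_mul_nonneg_of_factored_le_zero (hαβ : α ≤ β)
    (hf : ∀ x ∈ Ici X, HasDerivAt f (f' x) x) (hf' : ∀ x ∈ Ici X, HasDerivAt f' (f'' x) x)
    (hf0 : ∀ x ∈ Ici X, 0 ≤ f x)
    (hineq : ∀ x ∈ Ici X, f'' x + (α + β) * f' x + α * β * f x ≤ 0) :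
    ∀ x ∈ Ici X, 0 ≤ f' x + β * f x := by
  intro z hz
  by_contra! hneg
  have hanti : AntitoneOn (fun x => Real.exp (α * x) * (f' x + β * f x)) (Ici X) :=
    antitoneOn_exp_mul_mul (convex_Ici X)
      (fun x hx => (hf' x hx).add ((hf x hx).const_mul β))
      fun x hx => by linarith [hineq x hx]
  have hexp (x : ℝ) : Real.exp (β * x) = Real.exp ((β - α) * x) * Real.exp (α * x) := by
    rw [← Real.exp_add]; ring_nf
  have hslope : ∀ x ∈ Ici z,
      Real.exp (β * x) * (f' x + β * f x) ≤ Real.exp (β * z) * (f' z + β * f z) := by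
    intro x hx
    calc Real.exp (β * x) * (f' x + β * f x)
        = Real.exp ((β - α) * x) * (Real.exp (α * x) * (f' x + β * f x)) := by
          rw [hexp, mul_assoc]
      _ ≤ Real.exp ((β - α) * x) * (Real.exp (α * z) * (f' z + β * f z)) :=
          mul_le_mul_of_nonneg_left (hanti hz (Ici_subset_Ici.2 hz hx) hx) (Real.exp_nonneg _)
      _ ≤ Real.exp ((β - α) * z) * (Real.exp (α * z) * (f' z + β * f z)) :=
          mul_le_mul_of_nonpos_right
            (Real.exp_le_exp.2 (mul_le_mul_of_nonneg_left hx (sub_nonneg.2 hαβ)))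
            (mul_neg_of_pos_of_neg (Real.exp_pos _) hneg).le
      _ = Real.exp (β * z) * (f' z + β * f z) := by rw [hexp, mul_assoc]
  have hlim : Tendsto (fun x => Real.exp (β * x) * f x) atTop atBot :=
    tendsto_atBot_of_hasDerivAt_le_neg (mul_neg_of_pos_of_neg (Real.exp_pos _) hneg)
      (fun x hx => hasDerivAt_exp_mul_mul β (hf x (Ici_subset_Ici.2 hz hx))) hslope
  obtain ⟨x, hx, hxneg⟩ :=
    ((eventually_ge_atTop X).and (hlim.eventually_lt_atBot 0)).exists
  exact hxneg.not_ge (mul_nonneg (Real.exp_nonneg _) (hf0 x hx))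

lemma exp_neg_mul_isBigO_of_monotoneOn_exp_mul_mul (hX : 0 < f X)
    (hmono : MonotoneOn (fun x => Real.exp (β * x) * f x) (Ici X)) :
    (fun x => Real.exp (-(β * x))) =O[atTop] f := by
  refine IsBigO.of_bound (Real.exp (β * X) * f X)⁻¹ ?_
  filter_upwards [eventually_ge_atTop X] with x hx
  have hle : Real.exp (β * X) * f X ≤ Real.exp (β * x) * f x := hmono self_mem_Ici hx hx
  rw [Real.norm_of_nonneg (Real.exp_nonneg _), ← div_eq_inv_mul, le_div_iff₀ (by positivity),
    Real.exp_neg, inv_mul_le_iff₀ (Real.exp_pos _)]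
  exact hle.trans (mul_le_mul_of_nonneg_left (Real.le_norm_self _) (Real.exp_nonneg _))

lemma exp_neg_mul_isBigO_of_factored_le_zero (hαβ : α ≤ β)
    (hf : ∀ᶠ x in atTop, HasDerivAt f (f' x) x) (hf' : ∀ᶠ x in atTop, HasDerivAt f' (f'' x) x)
    (hpos : ∀ᶠ x in atTop, 0 < f x)
    (hineq : ∀ᶠ x in atTop, f'' x + (α + β) * f' x + α * β * f x ≤ 0) :
    (fun x => Real.exp (-(β * x))) =O[atTop] f := by
  obtain ⟨X, hX⟩ := eventually_atTop.1 (hf.and (hf'.and (hpos.and hineq)))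
  choose hf hf' hpos hineq using hX
  exact exp_neg_mul_isBigO_of_monotoneOn_exp_mul_mul (hpos X le_rfl)
    (monotoneOn_exp_mul_mul (convex_Ici X) hf
      (deriv_add_mul_nonneg_of_factored_le_zero hαβ hf hf' (fun x hx => (hpos x hx).le) hineq))

lemma exp_neg_mul_isBigO_of_perturbed_factored_le_zero {g : ℝ → ℝ} {r s : ℝ}
    (hr : r < β) (hs : s < β)
    (hf : ∀ᶠ x in atTop, HasDerivAt f (f' x) x) (hf' : ∀ᶠ x in atTop, HasDerivAt f' (f'' x) x)
    (hpos : ∀ᶠ x in atTop, 0 < f x) (hg : g =o[atTop] f)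
    (hineq : ∀ᶠ x in atTop, f'' x + (r + s) * f' x + r * s * f x + g x ≤ 0) :
    (fun x => Real.exp (-(β * x))) =O[atTop] f := by
  have hδ : 0 < (β - r) * (β - s) := mul_pos (sub_pos.2 hr) (sub_pos.2 hs)
  -- `(D + r)(D + s) - (β - r)(β - s) = (D + (r + s - β))(D + β)`
  have hfactored : ∀ᶠ x in atTop,
      f'' x + (r + s - β + β) * f' x + (r + s - β) * β * f x ≤ 0 := by
    filter_upwards [hineq, hpos, hg.bound hδ] with x hineqx hposx hgx
    rw [Real.norm_of_nonneg hposx.le] at hgx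
    linarith [neg_le_of_abs_le hgx]
  exact exp_neg_mul_isBigO_of_factored_le_zero (by linarith) hf hf' hpos hfactored

end Supersolution

lemma exp_neg_mul_isLittleO_exp_neg_mul {b c : ℝ} (hbc : b < c) :
    (fun x : ℝ => Real.exp (-(c * x))) =o[atTop] fun x => Real.exp (-(b * x)) := by
  rw [Real.isLittleO_exp_comp_exp_comp]
  exact (tendsto_id.const_mul_atTop (sub_pos.2 hbc)).congr fun x => by simp only [id_eq]; ring

theorem littleo_of_forcing_scalar_general {W W' W'' J1 J2 : ℝ → ℝ} {r s μ κ : ℝ}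
    (hr : r < μ) (hs : s < μ)
    (hW : ∀ᶠ ξ in atTop, HasDerivAt W (W' ξ) ξ)
    (hW' : ∀ᶠ ξ in atTop, HasDerivAt W' (W'' ξ) ξ)
    (hpos : ∀ᶠ ξ in atTop, 0 < W ξ)
    (heq : ∀ᶠ ξ in atTop, W'' ξ + (r + s) * W' ξ + r * s * W ξ + (J1 ξ + J2 ξ) = 0)
    (hJ1 : Tendsto (fun ξ => J1 ξ / W ξ) atTop (nhds 0))
    (hJ2 : ∀ᶠ ξ in atTop, 0 ≤ J2 ξ ∧ J2 ξ ≤ κ * Real.exp (-(μ * ξ))) :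
    Tendsto (fun ξ => J2 ξ / W ξ) atTop (nhds 0) ∧
    Tendsto (fun ξ => (J1 ξ + J2 ξ) / W ξ) atTop (nhds 0) := by
  obtain ⟨β, hβ, hβμ⟩ := exists_between (max_lt hr hs)
  obtain ⟨hrβ, hsβ⟩ := max_lt_iff.1 hβ
  have hJ1o : J1 =o[atTop] W :=
    isLittleO_of_tendsto' (hpos.mono fun ξ hξ h0 => absurd h0 hξ.ne') hJ1
  have hexp : (fun ξ => Real.exp (-(β * ξ))) =O[atTop] W :=
    exp_neg_mul_isBigO_of_perturbed_factored_le_zero hrβ hsβ hW hW' hpos hJ1o <| by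
      filter_upwards [heq, hJ2] with ξ heqξ hJ2ξ
      linarith [hJ2ξ.1]
  have hJ2O : J2 =O[atTop] fun ξ => Real.exp (-(μ * ξ)) :=
    IsBigO.of_bound κ <| hJ2.mono fun ξ hξ => by
      simpa only [Real.norm_of_nonneg hξ.1, Real.norm_of_nonneg (Real.exp_nonneg _)] using hξ.2
  have hJ2o : J2 =o[atTop] W :=
    (hJ2O.trans_isLittleO (exp_neg_mul_isLittleO_exp_neg_mul hβμ)).trans_isBigO hexp
  exact ⟨hJ2o.tendsto_div_nhds_zero, (hJ1o.add hJ2o).tendsto_div_nhds_zero⟩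

/-- If a positive `C²` function `Ŵ` on `(a,∞)` solves `Ŵ'' + 2Ŵ' + Ŵ + 𝒥 = 0` with
`𝒥 = 𝒥₁ + 𝒥₂`, `𝒥₁ = o(Ŵ)` and `κ₂ e^{-2ξ} ≤ 𝒥₂(ξ) ≤ κ₁ e^{-2ξ}` for large `ξ`,
then `𝒥₂ = o(Ŵ)` (hence `𝒥 = o(Ŵ)`) as `ξ → +∞`. -/
theorem littleo_of_forcing_scalar
    (a : ℝ) (W J1 J2 : ℝ → ℝ)
    (hW2 : ContDiffOn ℝ 2 W (Ioi a))
    (hWpos : ∀ ξ ∈ Ioi a, 0 < W ξ)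
    (hJ1c : ContinuousOn J1 (Ioi a)) (hJ2c : ContinuousOn J2 (Ioi a))
    (heq : ∀ ξ ∈ Ioi a, deriv (deriv W) ξ + 2 * deriv W ξ + W ξ + (J1 ξ + J2 ξ) = 0)
    (hJ1o : Tendsto (fun ξ => J1 ξ / W ξ) atTop (nhds 0))
    (κ₁ κ₂ ξb : ℝ) (hκ₂ : 0 < κ₂) (hκ : κ₂ ≤ κ₁) (hξb : a < ξb)
    (hJ2b : ∀ ξ, ξb ≤ ξ →
      κ₂ * Real.exp (-(2 * ξ)) ≤ J2 ξ ∧ J2 ξ ≤ κ₁ * Real.exp (-(2 * ξ))) :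
    Tendsto (fun ξ => J2 ξ / W ξ) atTop (nhds 0) ∧
    Tendsto (fun ξ => (J1 ξ + J2 ξ) / W ξ) atTop (nhds 0) := by
  have hlarge : ∀ᶠ ξ in atTop, ξ ∈ Ioi a := eventually_gt_atTop a
  have hdW : DifferentiableOn ℝ W (Ioi a) := hW2.differentiableOn two_ne_zero
  have hddW : DifferentiableOn ℝ (deriv W) (Ioi a) :=
    (hW2.deriv_of_isOpen isOpen_Ioi (by norm_num)).differentiableOn one_ne_zero
  exact littleo_of_forcing_scalar_general one_lt_two one_lt_two
    (hlarge.mono fun ξ hξ => hdW.hasDerivAt (Ioi_mem_nhds hξ))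
    (hlarge.mono fun ξ hξ => hddW.hasDerivAt (Ioi_mem_nhds hξ)) (hlarge.mono hWpos)
    (hlarge.mono fun ξ hξ => by linarith [heq ξ hξ]) hJ1o
    ((eventually_ge_atTop ξb).mono fun ξ hξ =>
      (hJ2b ξ hξ).imp_left (le_trans (by positivity)))
end
end

section
/- Assume (A1)–(A3). Then the minimal traveling wave speed is nondecreasing in the parameter: if ŝ ≥ s ≥ 0 then c*(ŝ) ≥ c*(s). -/
open Filter Asymptotics MeasureTheory Set

noncomputable section

/-- A traveling wave front with speed `c` for the nonlinearity `g`. -/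
def IsFront (g : ℝ → ℝ) (c : ℝ) (W : ℝ → ℝ) : Prop :=
  ContDiff ℝ 2 W ∧
  (∀ ξ, deriv (deriv W) ξ + c * deriv W ξ + g (W ξ) = 0) ∧
  Tendsto W atBot (nhds 1) ∧ Tendsto W atTop (nhds 0) ∧
  (∀ ξ, deriv W ξ < 0)

/-!
If `0 < g ≤ h` on `(0, 1)`, then every speed of a front for `h` is also the speed of a front for
`g`; monotonicity of the minimal speed is a special case. Along a front, `p = -W'` as a function of
the level `w = W ξ` solves `p' = c - g / p`. The right-hand side is nondecreasing in `p`, so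
solutions compare backwards from a common right endpoint, although it is singular at `p = 0`.
Let `P` be the profile of the front for `h`. On intervals exhausting `(0, 1)`, the solutions for `g`
that agree with `P` at the right endpoint lie below `P`, decrease from one interval to the next, and
stay away from zero locally uniformly, so they converge to a solution `p ≤ P` on `(0, 1)`. The
distance `∫ dw / p` travelled from the level `1 / 2` dominates `∫ dw / P`, which diverges at both
ends; hence `p` is the profile of a front defined on the whole line.
-/

theorem le_of_right_le_of_deriv_le {u v u' v' : ℝ → ℝ} {a b : ℝ}
    (hu : ∀ x ∈ Icc a b, HasDerivWithinAt u (u' x) (Icc a b) x)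
    (hv : ∀ x ∈ Icc a b, HasDerivWithinAt v (v' x) (Icc a b) x)
    (hb : u b ≤ v b) (hderiv : ∀ x ∈ Icc a b, v x < u x → v' x ≤ u' x) :
    ∀ x ∈ Icc a b, u x ≤ v x := by
  intro x₀ hx₀
  by_contra! hlt
  have hx₀b : x₀ < b := hx₀.2.lt_of_ne fun h => (h ▸ hlt).not_ge hb
  set η := (u x₀ - v x₀) / (2 * (b - x₀)) with hη
  have hη_pos : 0 < η := div_pos (sub_pos.2 hlt) (by linarith)
  have hη_mul : η * (b - x₀) = (u x₀ - v x₀) / 2 := by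
    have : b - x₀ ≠ 0 := (sub_pos.2 hx₀b).ne'
    rw [hη]
    field_simp
  have hsub : Icc x₀ b ⊆ Icc a b := Icc_subset_Icc_left hx₀.1
  have hd (x : ℝ) (hx : x ∈ Icc a b) :
      HasDerivWithinAt (fun y => v y - u y) (v' x - u' x) (Icc a b) x :=
    (hv x hx).sub (hu x hx)
  -- Where `u` exceeds `v`, the difference `v - u` does not increase, so it stays below the line
  -- of small slope `η` through its value at `x₀`, which is still negative at `b`.
  have hline : ∀ ⦃x⦄, x ∈ Icc x₀ b → v x - u x ≤ (v x₀ - u x₀) + η * (x - x₀) := by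
    refine image_le_of_deriv_right_lt_deriv_boundary' (B' := fun _ => η)
      (fun x hx => (hd x (hsub hx)).continuousWithinAt.mono hsub)
      (fun x hx => (hd x (hsub (Ico_subset_Icc_self hx))).mono_of_mem_nhdsWithin ?_)
      (by simp) (by fun_prop) (fun x _ => ?_) (fun x hx heq => ?_)
    · exact mem_of_superset (Icc_mem_nhdsGE hx.2) (Icc_subset_Icc_left (hx₀.1.trans hx.1))
    · simpa using ((((hasDerivAt_id x).sub_const x₀).const_mul η).const_add
        (v x₀ - u x₀)).hasDerivWithinAt
    · have hxb : η * (x - x₀) ≤ η * (b - x₀) := by gcongr; exact hx.2.le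
      have := hderiv x (hsub (Ico_subset_Icc_self hx)) (by linarith)
      linarith
  linarith [hline (right_mem_Icc.2 hx₀b.le)]

section ODE

open ODE

variable {E : Type*} [NormedAddCommGroup E] [NormedSpace ℝ E]

theorem exists_forall_mem_Icc_hasDerivWithinAt_of_lipschitzWith [CompleteSpace E]
    {F : ℝ → E → E} {a b t₀ : ℝ} {K L : NNReal} (ht₀ : t₀ ∈ Icc a b)
    (hlip : ∀ t ∈ Icc a b, LipschitzWith K (F t)) (hcont : ∀ y, ContinuousOn (F · y) (Icc a b))
    (hL : ∀ t ∈ Icc a b, ∀ y, ‖F t y‖ ≤ L) (y₀ : E) :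
    ∃ u : ℝ → E, u t₀ = y₀ ∧
      ∀ t ∈ Icc a b, HasDerivWithinAt u (F t (u t)) (Icc a b) t := by
  have hPL : IsPicardLindelof F (⟨t₀, ht₀⟩ : Icc a b) y₀
      (L * (max (b - t₀) (t₀ - a)).toNNReal) 0 L K :=
    { lipschitzOnWith := fun t ht => (hlip t ht).lipschitzOnWith
      continuousOn := fun y _ => hcont y
      norm_le := fun t ht y _ => hL t ht y
      mul_max_le := by simp [le_max_of_le_left (sub_nonneg.2 ht₀.2)] }
  exact hPL.exists_eq_forall_mem_Icc_hasDerivWithinAt₀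

variable {ι : Type*} {l : Filter ι} [l.NeBot] {F : ℝ → E → E} {K : Set E}
  {q : ι → ℝ → E} {r : ℝ → E} {a b : ℝ}

theorem continuousOn_of_tendsto_of_hasDerivWithinAt (hK : IsCompact K)
    (hF : ContinuousOn F.uncurry (Icc a b ×ˢ K))
    (hq : ∀ᶠ n in l, ∀ x ∈ Icc a b,
      q n x ∈ K ∧ HasDerivWithinAt (q n) (F x (q n x)) (Icc a b) x)
    (hr : ∀ x ∈ Icc a b, Tendsto (q · x) l (nhds (r x))) :
    ContinuousOn r (Icc a b) := by
  obtain ⟨C, hC⟩ := (isCompact_Icc.prod hK).exists_bound_of_continuousOn hF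
  have hlip : LipschitzOnWith C.toNNReal r (Icc a b) := by
    refine LipschitzOnWith.of_dist_le_mul fun x hx y hy => ?_
    refine le_of_tendsto ((hr x hx).dist (hr y hy)) ?_
    filter_upwards [hq] with n hn
    refine ((convex_Icc a b).lipschitzOnWith_of_nnnorm_hasDerivWithin_le
      (fun z hz => (hn z hz).2) fun z hz => ?_).dist_le_mul x hx y hy
    exact NNReal.le_toNNReal_of_coe_le (hC (z, q n z) ⟨hz, (hn z hz).1⟩)
  exact hlip.continuousOn

theorem tendsto_picard_of_hasDerivWithinAt [l.IsCountablyGenerated] (hK : IsCompact K)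
    (hF : ContinuousOn F.uncurry (Icc a b ×ˢ K))
    (hq : ∀ᶠ n in l, ∀ x ∈ Icc a b,
      q n x ∈ K ∧ HasDerivWithinAt (q n) (F x (q n x)) (Icc a b) x)
    (hr : ∀ x ∈ Icc a b, Tendsto (q · x) l (nhds (r x))) {x : ℝ} (hx : x ∈ Icc a b) :
    Tendsto (fun n => picard F a (q n a) (q n) x) l (nhds (picard F a (r a) r x)) := by
  obtain ⟨C, hC⟩ := (isCompact_Icc.prod hK).exists_bound_of_continuousOn hF
  have hsub : uIoc a x ⊆ Icc a b :=
    uIoc_subset_uIcc.trans (uIcc_subset_Icc ⟨le_rfl, hx.1.trans hx.2⟩ hx)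
  refine (hr a ⟨le_rfl, hx.1.trans hx.2⟩).add ?_
  refine intervalIntegral.tendsto_integral_filter_of_dominated_convergence (fun _ => C) ?_ ?_
    intervalIntegrable_const (Eventually.of_forall fun t ht => ?_)
  · filter_upwards [hq] with n hn
    have hqn : ContinuousOn (q n) (Icc a b) := fun t ht => (hn t ht).2.continuousWithinAt
    exact ((continuousOn_comp hF hqn fun t ht => (hn t ht).1).mono hsub).aestronglyMeasurable
      measurableSet_uIoc
  · filter_upwards [hq] with n hn
    exact Eventually.of_forall fun t ht => hC (t, q n t) ⟨hsub ht, (hn t (hsub ht)).1⟩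
  · have hqK : ∀ᶠ n in l, (t, q n t) ∈ Icc a b ×ˢ K :=
      hq.mono fun n hn => ⟨hsub ht, (hn t (hsub ht)).1⟩
    have hrK : r t ∈ K := hK.isClosed.mem_of_tendsto (hr t (hsub ht)) (hqK.mono fun n hn => hn.2)
    exact (hF (t, r t) ⟨hsub ht, hrK⟩).tendsto.comp (tendsto_nhdsWithin_iff.2
      ⟨tendsto_const_nhds.prodMk_nhds (hr t (hsub ht)), hqK⟩)

theorem hasDerivWithinAt_of_tendsto_of_isCompact [CompleteSpace E] [l.IsCountablyGenerated]
    (hK : IsCompact K) (hF : ContinuousOn F.uncurry (Icc a b ×ˢ K))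
    (hq : ∀ᶠ n in l, ∀ x ∈ Icc a b,
      q n x ∈ K ∧ HasDerivWithinAt (q n) (F x (q n x)) (Icc a b) x)
    (hr : ∀ x ∈ Icc a b, Tendsto (q · x) l (nhds (r x))) :
    ∀ x ∈ Icc a b, r x ∈ K ∧ HasDerivWithinAt r (F x (r x)) (Icc a b) x := by
  have hrK (x : ℝ) (hx : x ∈ Icc a b) : r x ∈ K :=
    hK.isClosed.mem_of_tendsto (hr x hx) (hq.mono fun n hn => (hn x hx).1)
  have hrc := continuousOn_of_tendsto_of_hasDerivWithinAt hK hF hq hr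
  have hpicard : EqOn r (picard F a (r a) r) (Icc a b) := by
    intro x hx
    have hsub : uIcc a x ⊆ Icc a b := uIcc_subset_Icc ⟨le_rfl, hx.1.trans hx.2⟩ hx
    refine tendsto_nhds_unique ((hr x hx).congr' ?_)
      (tendsto_picard_of_hasDerivWithinAt hK hF hq hr hx)
    filter_upwards [hq] with n hn
    exact (picard_eq_of_hasDerivAt (hF.mono (prod_mono_left hsub))
      (fun t ht => (hn t (hsub ht)).2.mono hsub) fun t ht => (hn t (hsub ht)).1).symm
  intro x hx
  exact ⟨hrK x hx, (hasDerivWithinAt_picard_Icc ⟨le_rfl, hx.1.trans hx.2⟩ hF hrc hrK _ hx).congr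
    hpicard (hpicard hx)⟩

end ODE

/-- A solution on the levels `w ∈ s` of the phase-plane form `p' = c - g / p` of the front
equation: `p w` stands for `-W'`, expressed as a function of the level `w = W ξ`. -/
def IsProfileOn (g : ℝ → ℝ) (c : ℝ) (s : Set ℝ) (p : ℝ → ℝ) : Prop :=
  ∀ w ∈ s, 0 < p w ∧ HasDerivWithinAt p (c - g w / p w) s w

theorem sub_div_le_neg_one {c y p : ℝ} (hp : 0 < p) (hpy : p ≤ y / (|c| + 1)) :
    c - y / p ≤ -1 := by
  have hle : |c| + 1 ≤ y / p := by
    rw [le_div_iff₀ (by positivity)] at hpy ⊢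
    linarith
  linarith [le_abs_self c]

theorem lipschitzWith_inv_max {m : ℝ} (hm : 0 < m) :
    LipschitzWith (m⁻¹ * m⁻¹).toNNReal fun y => (max m y)⁻¹ := by
  refine LipschitzWith.of_dist_le_mul fun y z => ?_
  have hy : 0 < max m y := lt_max_of_lt_left hm
  have hz : 0 < max m z := lt_max_of_lt_left hm
  have hmax : dist (max m y) (max m z) ≤ dist y z := by
    simpa using (LipschitzWith.id.const_max m).dist_le_mul y z
  calc dist (max m y)⁻¹ (max m z)⁻¹
      = (max m y)⁻¹ * (max m z)⁻¹ * dist (max m y) (max m z) := by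
        rw [Real.dist_eq, Real.dist_eq, inv_sub_inv hy.ne' hz.ne', abs_div,
          abs_of_pos (mul_pos hy hz), abs_sub_comm]
        field_simp
    _ ≤ m⁻¹ * m⁻¹ * dist y z := by
        gcongr
        exacts [le_max_left m y, le_max_left m z]
    _ = _ := by rw [Real.coe_toNNReal _ (by positivity)]

theorem exists_hasDerivWithinAt_sub_div_max {g : ℝ → ℝ} {a b m : ℝ} (hab : a ≤ b)
    (hg : ContinuousOn g (Icc a b)) (hm : 0 < m) (c y₀ : ℝ) :
    ∃ p : ℝ → ℝ, p b = y₀ ∧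
      ∀ x ∈ Icc a b, HasDerivWithinAt p (c - g x / max m (p x)) (Icc a b) x := by
  obtain ⟨M, hM⟩ := isCompact_Icc.exists_bound_of_continuousOn hg
  have hM_nonneg : 0 ≤ M := (norm_nonneg _).trans (hM b (right_mem_Icc.2 hab))
  refine exists_forall_mem_Icc_hasDerivWithinAt_of_lipschitzWith (right_mem_Icc.2 hab)
    (K := M.toNNReal * (m⁻¹ * m⁻¹).toNNReal) (L := (|c| + M / m).toNNReal)
    (fun t ht => ?_) (fun y => continuousOn_const.sub (hg.div_const _)) (fun t ht y => ?_) y₀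
  · refine LipschitzWith.of_dist_le_mul fun y z => ?_
    have hinv := (lipschitzWith_inv_max hm).dist_le_mul y z
    calc dist (c - g t / max m y) (c - g t / max m z)
        = ‖g t‖ * dist (max m y)⁻¹ (max m z)⁻¹ := by
          rw [dist_sub_left, div_eq_mul_inv, div_eq_mul_inv, dist_eq_norm, ← mul_sub, norm_mul,
            ← dist_eq_norm]
      _ ≤ M.toNNReal * ((m⁻¹ * m⁻¹).toNNReal * dist y z) := by
          gcongr
          exact (hM t ht).trans (Real.le_coe_toNNReal M)
      _ = _ := by rw [NNReal.coe_mul, mul_assoc]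
  · calc ‖c - g t / max m y‖ ≤ ‖c‖ + ‖g t‖ / ‖max m y‖ := by
          rw [← norm_div]
          exact norm_sub_le _ _
      _ ≤ |c| + M / m := by
          rw [Real.norm_eq_abs c, Real.norm_of_nonneg (hm.le.trans (le_max_left m y))]
          gcongr
          exacts [hM t ht, le_max_left m y]
      _ ≤ _ := Real.le_coe_toNNReal _

theorem exists_isProfileOn_Icc {g : ℝ → ℝ} {a b y₀ : ℝ} (hab : a ≤ b)
    (hg : ContinuousOn g (Icc a b)) (hg_pos : ∀ x ∈ Icc a b, 0 < g x) (c : ℝ) (hy₀ : 0 < y₀) :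
    ∃ p, IsProfileOn g c (Icc a b) p ∧ p b = y₀ := by
  obtain ⟨x₀, hx₀, hmin⟩ := isCompact_Icc.exists_isMinOn (nonempty_Icc.2 hab) hg
  set m := min y₀ (g x₀ / (|c| + 1))
  have hm : 0 < m := lt_min hy₀ (div_pos (hg_pos x₀ hx₀) (by positivity))
  obtain ⟨p, hpb, hp⟩ := exists_hasDerivWithinAt_sub_div_max hab hg hm c y₀
  have hmp : ∀ x ∈ Icc a b, m ≤ p x := by
    refine le_of_right_le_of_deriv_le (fun x _ => hasDerivWithinAt_const x _ m) hp
      (hpb ▸ min_le_left _ _) fun x hx hlt => ?_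
    have hm_le : m ≤ g x / (|c| + 1) := (min_le_right _ _).trans (by gcongr; exact hmin hx)
    rw [max_eq_left hlt.le]
    linarith [sub_div_le_neg_one hm hm_le]
  refine ⟨p, fun x hx => ⟨hm.trans_le (hmp x hx), ?_⟩, hpb⟩
  simpa only [max_eq_right (hmp x hx)] using hp x hx

namespace IsProfileOn

variable {g h p P : ℝ → ℝ} {c a b : ℝ} {s t : Set ℝ}

theorem mono (hp : IsProfileOn g c t p) (hst : s ⊆ t) : IsProfileOn g c s p :=
  fun w hw => ⟨(hp w (hst hw)).1, (hp w (hst hw)).2.mono hst⟩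

theorem congr (hp : IsProfileOn g c s p) (hP : EqOn P p s) : IsProfileOn g c s P :=
  fun w hw => by simpa only [hP hw] using And.imp_right (·.congr hP (hP hw)) (hp w hw)

theorem continuousOn (hp : IsProfileOn g c s p) : ContinuousOn p s :=
  fun w hw => (hp w hw).2.continuousWithinAt

theorem le_of_right_le (hp : IsProfileOn g c (Icc a b) p) (hP : IsProfileOn h c (Icc a b) P)
    (hg : ∀ x ∈ Icc a b, 0 ≤ g x) (hgh : ∀ x ∈ Icc a b, g x ≤ h x) (hb : p b ≤ P b) :
    ∀ x ∈ Icc a b, p x ≤ P x := by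
  refine le_of_right_le_of_deriv_le (fun x hx => (hp x hx).2) (fun x hx => (hP x hx).2) hb
    fun x hx hlt => sub_le_sub_left ?_ c
  exact div_le_div₀ ((hg x hx).trans (hgh x hx)) (hgh x hx) (hP x hx).1 hlt.le

theorem exists_uniform_lower_bound {b' : ℝ} (hab : a ≤ b) (hbb' : b < b')
    (hg : ContinuousOn g (Icc a b')) (hg_pos : ∀ x ∈ Icc a b', 0 < g x) (c : ℝ) :
    ∃ m > 0, ∀ p, IsProfileOn g c (Icc a b') p → ∀ x ∈ Icc a b, m ≤ p x := by
  have hab' : a < b' := hab.trans_lt hbb'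
  obtain ⟨x₀, hx₀, hmin⟩ := isCompact_Icc.exists_isMinOn (nonempty_Icc.2 hab'.le) hg
  set k := g x₀ / (|c| + 1)
  have hk : 0 < k := div_pos (hg_pos x₀ hx₀) (by positivity)
  set ε := min 1 (k / (b' - a))
  have hε : 0 < ε := lt_min one_pos (div_pos hk (sub_pos.2 hab'))
  have hεk : ε * (b' - a) ≤ k := (le_div_iff₀ (sub_pos.2 hab')).1 (min_le_right _ _)
  refine ⟨ε * (b' - b), mul_pos hε (sub_pos.2 hbb'), fun p hp x hx => ?_⟩
  -- The line of slope `-ε` vanishing at `b'` is a lower barrier: below it, `p' ≤ -1 ≤ -ε`.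
  have hline : ∀ x ∈ Icc a b', ε * (b' - x) ≤ p x := by
    refine le_of_right_le_of_deriv_le (u' := fun _ => -ε) (fun x _ => ?_) (fun x hx => (hp x hx).2)
      (by simpa using (hp b' (right_mem_Icc.2 hab'.le)).1.le) fun x hx hlt => ?_
    · simpa using (((hasDerivAt_id x).const_sub b').const_mul ε).hasDerivWithinAt
    · have hpk : p x ≤ g x / (|c| + 1) :=
        calc p x ≤ ε * (b' - x) := hlt.le
          _ ≤ ε * (b' - a) := by gcongr; exact hx.1
          _ ≤ k := hεk
          _ ≤ g x / (|c| + 1) := div_le_div_of_nonneg_right (hmin hx) (by positivity)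
      linarith [sub_div_le_neg_one (hp x hx).1 hpk, min_le_left 1 (k / (b' - a))]
  calc ε * (b' - b) ≤ ε * (b' - x) := by gcongr; exact hx.2
    _ ≤ p x := hline x ⟨hx.1, hx.2.trans hbb'.le⟩

theorem exists_antitone_seq_le (hab : a < b) (hg : ContinuousOn g (Ioo a b))
    (hg_pos : ∀ x ∈ Ioo a b, 0 < g x) (hgh : ∀ x ∈ Ioo a b, g x ≤ h x)
    (hP : IsProfileOn h c (Ioo a b) P) :
    ∃ q : ℕ → ℝ → ℝ, (∀ x ∈ Ioo a b, Antitone (q · x)) ∧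
      (∀ n, ∀ x ∈ Ioo a b, q n x ∈ Ioc 0 (P x)) ∧
      ∀ α β, a < α → β < b → ∀ᶠ n in atTop, IsProfileOn g c (Icc α β) (q n) := by
  obtain ⟨A, B, hA_anti, hB_mono, hA, hB, hAB, hA_lim, hB_lim⟩ :=
    exists_seq_strictAnti_strictMono_tendsto hab
  have hsub (n : ℕ) : Icc (A n) (B n) ⊆ Ioo a b := Icc_subset_Ioo (hA n).1 (hB n).2
  have hsucc (n : ℕ) : Icc (A n) (B n) ⊆ Icc (A (n + 1)) (B (n + 1)) :=
    Icc_subset_Icc (hA_anti n.lt_succ_self).le (hB_mono n.lt_succ_self).le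
  choose p hp hpB using fun n => exists_isProfileOn_Icc (hAB n n).le (hg.mono (hsub n))
    (fun x hx => hg_pos x (hsub n hx)) c (hP (B n) (hB n)).1
  have hpP (n : ℕ) : ∀ x ∈ Icc (A n) (B n), p n x ≤ P x :=
    (hp n).le_of_right_le (hP.mono (hsub n)) (fun x hx => (hg_pos x (hsub n hx)).le)
      (fun x hx => hgh x (hsub n hx)) (hpB n).le
  have hp_succ (n : ℕ) : ∀ x ∈ Icc (A n) (B n), p (n + 1) x ≤ p n x :=
    ((hp (n + 1)).mono (hsucc n)).le_of_right_le (hp n)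
      (fun x hx => (hg_pos x (hsub n hx)).le) (fun _ _ => le_rfl)
      ((hpP (n + 1) _ (hsucc n (right_mem_Icc.2 (hAB n n).le))).trans (hpB n).ge)
  classical
  let q (n : ℕ) : ℝ → ℝ := (Icc (A n) (B n)).piecewise (p n) P
  have hqp (n : ℕ) : EqOn (q n) (p n) (Icc (A n) (B n)) := piecewise_eqOn _ _ _
  have hqP (n : ℕ) (x : ℝ) (hx : x ∉ Icc (A n) (B n)) : q n x = P x :=
    piecewise_eq_of_notMem _ _ _ hx
  have hq_mem (n : ℕ) (x : ℝ) (hx : x ∈ Ioo a b) : q n x ∈ Ioc 0 (P x) := by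
    by_cases hxn : x ∈ Icc (A n) (B n)
    · exact hqp n hxn ▸ ⟨(hp n x hxn).1, hpP n x hxn⟩
    · rw [hqP n x hxn]
      exact right_mem_Ioc.2 (hP x hx).1
  refine ⟨q, fun x hx => antitone_nat_of_succ_le fun n => ?_, hq_mem, fun α β hα hβ => ?_⟩
  · by_cases hxn : x ∈ Icc (A n) (B n)
    · simpa only [hqp n hxn, hqp (n + 1) (hsucc n hxn)] using hp_succ n x hxn
    · exact hqP n x hxn ▸ (hq_mem (n + 1) x hx).2
  · filter_upwards [hA_lim.eventually_lt_const hα, hB_lim.eventually_const_lt hβ] with n hAn hBn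
    exact ((hp n).congr (hqp n)).mono (Icc_subset_Icc hAn.le hBn.le)

theorem exists_le (hab : a < b) (hg : ContinuousOn g (Ioo a b))
    (hg_pos : ∀ x ∈ Ioo a b, 0 < g x) (hgh : ∀ x ∈ Ioo a b, g x ≤ h x)
    (hP : IsProfileOn h c (Ioo a b) P) :
    ∃ p, IsProfileOn g c (Ioo a b) p ∧ ∀ x ∈ Ioo a b, p x ≤ P x := by
  obtain ⟨q, hq_anti, hq_mem, hq⟩ := exists_antitone_seq_le hab hg hg_pos hgh hP
  have hlim (x : ℝ) (hx : x ∈ Ioo a b) : Tendsto (q · x) atTop (nhds (⨅ n, q n x)) :=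
    tendsto_atTop_ciInf (hq_anti x hx) ⟨0, forall_mem_range.2 fun n => (hq_mem n x hx).1.le⟩
  refine ⟨fun x => ⨅ n, q n x, fun w hw => ?_,
    fun x hx => le_of_tendsto' (hlim x hx) fun n => (hq_mem n x hx).2⟩
  obtain ⟨α, hα, hαw⟩ := exists_between hw.1
  obtain ⟨β, hwβ, hβ⟩ := exists_between hw.2
  obtain ⟨β', hββ', hβ'⟩ := exists_between hβ
  have hsub : Icc α β ⊆ Ioo a b := Icc_subset_Ioo hα hβ
  have hsub' : Icc α β' ⊆ Ioo a b := Icc_subset_Ioo hα hβ'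
  obtain ⟨m, hm, hm_le⟩ := exists_uniform_lower_bound (hαw.trans hwβ).le hββ' (hg.mono hsub')
    (fun x hx => hg_pos x (hsub' hx)) c
  obtain ⟨M, hM⟩ := isCompact_Icc.exists_bound_of_continuousOn (hP.continuousOn.mono hsub)
  have hF : ContinuousOn (Function.uncurry fun x y => c - g x / y) (Icc α β ×ˢ Icc m M) :=
    continuousOn_const.sub (((hg.mono hsub).comp continuousOn_fst fun z hz => hz.1).div
      continuousOn_snd fun z hz => (hm.trans_le hz.2.1).ne')
  have hqK : ∀ᶠ n in atTop, ∀ x ∈ Icc α β,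
      q n x ∈ Icc m M ∧ HasDerivWithinAt (q n) (c - g x / q n x) (Icc α β) x := by
    filter_upwards [hq α β hα hβ, hq α β' hα hβ'] with n hn hn' x hx
    exact ⟨⟨hm_le (q n) hn' x hx, (hq_mem n x (hsub hx)).2.trans
      ((le_abs_self _).trans (hM x hx))⟩, (hn x hx).2⟩
  obtain ⟨hwK, hderiv⟩ := hasDerivWithinAt_of_tendsto_of_isCompact isCompact_Icc hF hqK
    (fun x hx => hlim x (hsub hx)) w ⟨hαw.le, hwβ.le⟩
  exact ⟨hm.trans_le hwK.1, (hderiv.hasDerivAt (Icc_mem_nhds hαw hwβ)).hasDerivWithinAt⟩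

end IsProfileOn

theorem hasDerivAt_of_rightInvOn_of_strictAntiOn {W X : ℝ → ℝ} {s t : Set ℝ} {W' y : ℝ}
    (hs : IsOpen s) (ht : IsOpen t) (hW : StrictAntiOn W s) (hWst : MapsTo W s t)
    (hXts : MapsTo X t s) (hWX : RightInvOn X W t) (hy : y ∈ t)
    (hderiv : HasDerivAt W W' (X y)) (hW' : W' ≠ 0) : HasDerivAt X W'⁻¹ y := by
  have hXW : LeftInvOn X W s := hW.injOn.rightInvOn_of_leftInvOn hWX hWst hXts
  have hX_anti : AntitoneOn X t := fun a ha b hb hab => by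
    rwa [← hW.le_iff_ge (hXts ha) (hXts hb), hWX ha, hWX hb]
  have himage : X '' t = s :=
    (mapsTo_iff_image_subset.1 hXts).antisymm fun x hx => ⟨W x, hWst hx, hXW hx⟩
  have hX_cont : ContinuousAt X y :=
    continuousAt_of_monotoneOn_of_image_mem_nhds (β := ℝᵒᵈ) hX_anti.dual_right (ht.mem_nhds hy)
      (himage ▸ hs.mem_nhds (hXts hy) : X '' t ∈ nhds (X y))
  exact hderiv.of_local_left_inverse hX_cont hW' (eventually_of_mem (ht.mem_nhds hy) hWX)

theorem surjOn_univ_of_antitoneOn_sub {α : Type*} [LinearOrder α] [TopologicalSpace α]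
    {X Y : α → ℝ} {s : Set α} (hs : IsPreconnected s) (hX : AntitoneOn X s)
    (hX_surj : SurjOn X s univ) (hY : ContinuousOn Y s)
    (hYX : AntitoneOn (fun w => Y w - X w) s) : SurjOn Y s univ := by
  obtain ⟨x₀, hx₀, -⟩ := hX_surj (mem_univ 0)
  intro ξ _
  obtain ⟨u, hu, hXu⟩ := hX_surj (mem_univ (max (ξ - Y x₀ + X x₀) (X x₀) + 1))
  obtain ⟨v, hv, hXv⟩ := hX_surj (mem_univ (min (ξ - Y x₀ + X x₀) (X x₀) - 1))
  have hux₀ : u ≤ x₀ := (hX.reflect_lt hx₀ hu (by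
    linarith [le_max_right (ξ - Y x₀ + X x₀) (X x₀)])).le
  have hx₀v : x₀ ≤ v := (hX.reflect_lt hv hx₀ (by
    linarith [min_le_right (ξ - Y x₀ + X x₀) (X x₀)])).le
  refine hs.intermediate_value hv hu hY ⟨?_, ?_⟩
  · linarith [hYX hx₀ hv hx₀v, min_le_left (ξ - Y x₀ + X x₀) (X x₀)]
  · linarith [hYX hu hx₀ hux₀, le_max_left (ξ - Y x₀ + X x₀) (X x₀)]

/-- `X w` is the position `ξ` at which a front with profile `p = -W'` takes the value `w`. That `X`
attains every real value says that the front is defined on the whole line. -/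
structure IsFrontCoordinate (p X : ℝ → ℝ) : Prop where
  hasDerivAt : ∀ w ∈ Ioo (0 : ℝ) 1, HasDerivAt X (-(p w)⁻¹) w
  surjOn : SurjOn X (Ioo 0 1) univ

namespace IsFrontCoordinate

variable {p P X : ℝ → ℝ}

theorem strictAntiOn (hX : IsFrontCoordinate p X) (hp : ∀ w ∈ Ioo (0 : ℝ) 1, 0 < p w) :
    StrictAntiOn X (Ioo 0 1) := by
  refine strictAntiOn_of_hasDerivWithinAt_neg (f' := fun w => -(p w)⁻¹) (convex_Ioo 0 1)
    (HasDerivAt.continuousOn hX.hasDerivAt) ?_ ?_ <;> rw [interior_Ioo]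
  · exact fun w hw => (hX.hasDerivAt w hw).hasDerivWithinAt
  · exact fun w hw => neg_lt_zero.2 (inv_pos.2 (hp w hw))

theorem exists_of_le (hX : IsFrontCoordinate P X) (hp_cont : ContinuousOn p (Ioo 0 1))
    (hp : ∀ w ∈ Ioo (0 : ℝ) 1, 0 < p w) (hpP : ∀ w ∈ Ioo (0 : ℝ) 1, p w ≤ P w) :
    ∃ Y, IsFrontCoordinate p Y := by
  have hinv_cont : ContinuousOn (fun w => -(p w)⁻¹) (Ioo 0 1) :=
    (hp_cont.inv₀ fun w hw => (hp w hw).ne').neg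
  have hY (w : ℝ) (hw : w ∈ Ioo (0 : ℝ) 1) :
      HasDerivAt (fun w => ∫ x in (1 / 2 : ℝ)..w, -(p x)⁻¹) (-(p w)⁻¹) w :=
    intervalIntegral.integral_hasDerivAt_right
      (hinv_cont.mono (ordConnected_Ioo.uIcc_subset (by norm_num) hw)).intervalIntegrable
      (hinv_cont.stronglyMeasurableAtFilter isOpen_Ioo w hw)
      (hinv_cont.continuousAt (isOpen_Ioo.mem_nhds hw))
  refine ⟨_, hY, surjOn_univ_of_antitoneOn_sub isPreconnected_Ioo
    (hX.strictAntiOn fun w hw => (hp w hw).trans_le (hpP w hw)).antitoneOn hX.surjOn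
    (HasDerivAt.continuousOn hY) ?_⟩
  have hsub (w : ℝ) (hw : w ∈ Ioo (0 : ℝ) 1) := (hY w hw).sub (hX.hasDerivAt w hw)
  refine antitoneOn_of_hasDerivWithinAt_nonpos (convex_Ioo 0 1) (HasDerivAt.continuousOn hsub)
    (f' := fun w => -(p w)⁻¹ - -(P w)⁻¹) ?_ ?_ <;> rw [interior_Ioo]
  · exact fun w hw => (hsub w hw).hasDerivWithinAt
  · intro w hw
    have := inv_anti₀ (hp w hw) (hpP w hw)
    linarith

end IsFrontCoordinate

namespace IsFront

variable {g W : ℝ → ℝ} {c : ℝ}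

theorem strictAnti (hW : IsFront g c W) : StrictAnti W :=
  strictAnti_of_deriv_neg hW.2.2.2.2

theorem range_eq_Ioo (hW : IsFront g c W) : range W = Ioo 0 1 := by
  have hanti := hW.strictAnti
  obtain ⟨hC2, -, hbot, htop, -⟩ := hW
  refine Subset.antisymm (range_subset_iff.2 fun ξ => ⟨?_, ?_⟩) fun w hw => ?_
  · exact (hanti.antitone.le_of_tendsto htop (ξ + 1)).trans_lt (hanti (lt_add_one ξ))
  · exact (hanti (sub_one_lt ξ)).trans_le (hanti.antitone.ge_of_tendsto hbot (ξ - 1))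
  · obtain ⟨u, hu⟩ := (hbot.eventually_const_lt hw.2).exists
    obtain ⟨v, hv⟩ := (htop.eventually_lt_const hw.1).exists
    exact mem_range_of_exists_le_of_exists_ge hC2.continuous ⟨v, hv.le⟩ ⟨u, hu.le⟩

theorem exists_isProfileOn_isFrontCoordinate (hW : IsFront g c W) :
    ∃ P X, IsProfileOn g c (Ioo 0 1) P ∧ IsFrontCoordinate P X := by
  have hrange := hW.range_eq_Ioo
  have hanti := hW.strictAnti
  obtain ⟨hC2, hode, -, -, hneg⟩ := hW
  have hW_mem (ξ : ℝ) : W ξ ∈ Ioo 0 1 := hrange ▸ mem_range_self ξ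
  have hW_deriv (ξ : ℝ) : HasDerivAt W (deriv W ξ) ξ :=
    (hC2.differentiable (by norm_num) ξ).hasDerivAt
  have hW_deriv2 (ξ : ℝ) : HasDerivAt (deriv W) (deriv (deriv W) ξ) ξ :=
    ((contDiff_succ_iff_deriv (n := 1)).1 hC2).2.2.differentiable (by norm_num) ξ |>.hasDerivAt
  choose! X hX using fun w (hw : w ∈ Ioo 0 1) => hrange.symm ▸ hw
  have hX_deriv (w : ℝ) (hw : w ∈ Ioo 0 1) : HasDerivAt X (deriv W (X w))⁻¹ w :=
    hasDerivAt_of_rightInvOn_of_strictAntiOn isOpen_univ isOpen_Ioo (hanti.strictAntiOn _)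
      (fun ξ _ => hW_mem ξ) (mapsTo_univ _ _) hX hw (hW_deriv _) (hneg _).ne
  refine ⟨fun w => -deriv W (X w), X, fun w hw => ⟨neg_pos.2 (hneg _), ?_⟩, fun w hw => ?_, ?_⟩
  · convert! ((hW_deriv2 (X w)).comp w (hX_deriv w hw)).neg.hasDerivWithinAt using 1
    have hode_w : deriv (deriv W) (X w) = -c * deriv W (X w) - g w := by
      linarith [hX w hw ▸ hode (X w)]
    have := (hneg (X w)).ne
    rw [hode_w]
    field_simp
    ring
  · simpa only [inv_neg, neg_neg] using hX_deriv w hw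
  · exact fun ξ _ => ⟨W ξ, hW_mem ξ, hanti.injective (hX _ (hW_mem ξ))⟩

end IsFront

theorem IsProfileOn.isFront {g p W : ℝ → ℝ} {c : ℝ} (hp : IsProfileOn g c (Ioo 0 1) p)
    (hg : ContinuousOn g (Ioo 0 1)) (hW : ∀ ξ, HasDerivAt W (-p (W ξ)) ξ)
    (hrange : range W = Ioo 0 1) : IsFront g c W := by
  have hW_mem (ξ : ℝ) : W ξ ∈ Ioo 0 1 := hrange ▸ mem_range_self ξ
  have hW_cont : Continuous W := continuous_iff_continuousAt.2 fun ξ => (hW ξ).continuousAt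
  have hderiv : deriv W = fun ξ => -p (W ξ) := funext fun ξ => (hW ξ).deriv
  have hneg (ξ : ℝ) : deriv W ξ < 0 := by
    rw [hderiv]
    exact neg_lt_zero.2 (hp _ (hW_mem ξ)).1
  have hW_deriv2 (ξ : ℝ) : HasDerivAt (deriv W) (c * p (W ξ) - g (W ξ)) ξ := by
    obtain ⟨hpos, hp_deriv⟩ := hp _ (hW_mem ξ)
    rw [hderiv]
    convert! ((hp_deriv.hasDerivAt (isOpen_Ioo.mem_nhds (hW_mem ξ))).comp ξ (hW ξ)).neg using 1
    field_simp
  have hderiv2 : deriv (deriv W) = fun ξ => c * p (W ξ) - g (W ξ) :=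
    funext fun ξ => (hW_deriv2 ξ).deriv
  have hanti : Antitone W := (strictAnti_of_deriv_neg hneg).antitone
  refine ⟨?_, fun ξ => ?_, ?_, ?_, hneg⟩
  · refine (contDiff_succ_iff_deriv (n := 1)).2
      ⟨fun ξ => (hW ξ).differentiableAt, by simp, contDiff_one_iff_deriv.2
        ⟨fun ξ => (hW_deriv2 ξ).differentiableAt, hderiv2 ▸ ?_⟩⟩
    exact (continuous_const.mul (hp.continuousOn.comp_continuous hW_cont hW_mem)).sub
      (hg.comp_continuous hW_cont hW_mem)
  · rw [hderiv2, hderiv]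
    ring
  · exact tendsto_atBot_isLUB hanti (hrange ▸ isLUB_Ioo one_pos)
  · exact tendsto_atTop_isGLB hanti (hrange ▸ isGLB_Ioo one_pos)

theorem IsProfileOn.exists_isFront {g p Y : ℝ → ℝ} {c : ℝ} (hp : IsProfileOn g c (Ioo 0 1) p)
    (hg : ContinuousOn g (Ioo 0 1)) (hY : IsFrontCoordinate p Y) : ∃ W, IsFront g c W := by
  have hY_anti := hY.strictAntiOn fun w hw => (hp w hw).1
  choose W hW_mem hYW using fun ξ => hY.surjOn (mem_univ ξ)
  have hrange : range W = Ioo 0 1 :=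
    Subset.antisymm (range_subset_iff.2 hW_mem) fun w hw =>
      ⟨Y w, hY_anti.injOn (hW_mem _) hw (hYW _)⟩
  refine ⟨W, hp.isFront hg (fun ξ => ?_) hrange⟩
  have hinv : (-(p (W ξ))⁻¹)⁻¹ = -p (W ξ) := by rw [inv_neg, inv_inv]
  exact hinv ▸ hasDerivAt_of_rightInvOn_of_strictAntiOn isOpen_Ioo isOpen_univ hY_anti
    (mapsTo_univ _ _) (fun ξ _ => hW_mem ξ) (fun ξ _ => hYW ξ) (mem_univ ξ)
    (hY.hasDerivAt _ (hW_mem ξ)) (neg_ne_zero.2 (inv_ne_zero (hp _ (hW_mem ξ)).1.ne'))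

theorem IsFront.exists_of_le {g h W : ℝ → ℝ} {c : ℝ} (hW : IsFront h c W)
    (hg : ContinuousOn g (Ioo 0 1)) (hg_pos : ∀ w ∈ Ioo (0 : ℝ) 1, 0 < g w)
    (hgh : ∀ w ∈ Ioo (0 : ℝ) 1, g w ≤ h w) : ∃ V, IsFront g c V := by
  obtain ⟨P, X, hP, hX⟩ := hW.exists_isProfileOn_isFrontCoordinate
  obtain ⟨p, hp, hpP⟩ := hP.exists_le one_pos hg hg_pos hgh
  obtain ⟨Y, hY⟩ := hX.exists_of_le hp.continuousOn (fun w hw => (hp w hw).1) hpP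
  exact hp.exists_isFront hg hY

theorem cstar_monotone_general {ι : Type*} [Preorder ι] {S : Set ι} (f : ℝ → ι → ℝ) (cstar : ι → ℝ)
    (hcont : ∀ s ∈ S, ContinuousOn (f · s) (Ioo 0 1))
    (hpos : ∀ s ∈ S, ∀ w ∈ Ioo (0 : ℝ) 1, 0 < f w s)
    (hmono : ∀ w ∈ Ioo (0 : ℝ) 1, MonotoneOn (f w) S)
    (hcstar : ∀ s ∈ S, IsGLB {c | ∃ W, IsFront (f · s) c W} (cstar s)) :
    MonotoneOn cstar S := by
  intro s hs t ht hst
  refine (hcstar t ht).mono (hcstar s hs) fun c ⟨W, hW⟩ => ?_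
  exact hW.exists_of_le (hcont s hs) (hpos s hs) fun w hw => hmono w hw hs ht hst

/-- Under (A1)-(A3), the minimal traveling wave speed is nondecreasing in the parameter. -/
theorem cstar_monotone
    (f : ℝ → ℝ → ℝ) (cstar : ℝ → ℝ)
    -- (A1)
    (hA1 : ∀ s, 0 ≤ s →
      ContDiffOn ℝ 2 (fun w => f w s) (Icc 0 1) ∧
      f 0 s = 0 ∧ f 1 s = 0 ∧
      derivWithin (fun w => f w s) (Icc 0 1) 0 = 1 ∧
      derivWithin (fun w => f w s) (Icc 0 1) 1 < 0 ∧
      (∀ w ∈ Ioo (0:ℝ) 1, 0 < f w s))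
    -- (A2)
    (hA2 : ∃ L₀ > (0:ℝ), ∀ n : ℕ, n ≤ 2 → ∀ w ∈ Icc (0:ℝ) 1, ∀ sa sb : ℝ, 0 ≤ sa → 0 ≤ sb →
      |iteratedDerivWithin n (fun w => f w sa) (Icc 0 1) w -
        iteratedDerivWithin n (fun w => f w sb) (Icc 0 1) w| ≤ L₀ * |sa - sb|)
    -- (A3)
    (hA3 : ∀ s sh : ℝ, 0 ≤ s → s < sh →
      (∀ w ∈ Ioo (0:ℝ) 1, f w s < f w sh) ∧
      iteratedDerivWithin 2 (fun w => f w s) (Icc 0 1) 0 <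
        iteratedDerivWithin 2 (fun w => f w sh) (Icc 0 1) 0)
    -- minimal-speed characterization
    (hmin : ∀ s, 0 ≤ s → 2 ≤ cstar s ∧
      ∀ c, (∃ W : ℝ → ℝ, IsFront (fun w => f w s) c W) ↔ cstar s ≤ c) :
    ∀ s sh : ℝ, 0 ≤ s → s ≤ sh → cstar s ≤ cstar sh := by
  intro s sh hs hle
  refine cstar_monotone_general (S := Ici 0) f cstar
    (fun s hs => (hA1 s hs).1.continuousOn.mono Ioo_subset_Icc_self)
    (fun s hs => (hA1 s hs).2.2.2.2.2)
    (fun w hw s hs t _ hst => hst.eq_or_lt.elim (fun h => h ▸ le_rfl)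
      fun h => ((hA3 s t hs h).1 w hw).le)
    (fun s hs => ?_) hs (hs.trans hle) hle
  simpa only [(hmin s hs).2] using! isGLB_Ici (a := cstar s)
end
end
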